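/- Let S be a quasi-hereditary algebra with a simple-preserving duality satisfying strong property A and with gfd(S) = n. Then the global dimension of S equals 2n. -/

import Mathlib

/-!
Common definitions for formalizing "On the global and ∇-filtration dimensions of
quasi-hereditary algebras" by Erdmann and Parker.

We work with a finite-dimensional algebra `S` over a field `k`; since `S` is
finite dimensional over `k`, the finite-dimensional `S`-modules are exactly the
finitely generated ones, so we express finite-dimensionality of a module `M` as
`Module.Finite S M`.
-/

open CategoryTheory

namespace QHPaper

variable (S : Type) [Ring S]

/-- The subquotient `B ⧸ A` associated to two submodules `A B` of `M`. -/
abbrev subquot {M : ModuleCat.{0} S} (A B : Submodule S ↥M) : Type :=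
  ↥B ⧸ (Submodule.comap B.subtype A)

/-- A filtration `⊥ = f 0 ≤ f 1 ≤ ⋯ ≤ f n = ⊤` of `M` whose `i`-th section
`f (i+1) / f i` is isomorphic to the prescribed module `D i`. -/
def HasFiltrationWithSections (M : ModuleCat.{0} S) (n : ℕ)
    (f : Fin (n + 1) → Submodule S ↥M) (D : Fin n → ModuleCat.{0} S) : Prop :=
  Monotone f ∧ f 0 = ⊥ ∧ f (Fin.last n) = ⊤ ∧
    ∀ i : Fin n, Nonempty ((subquot S (f i.castSucc) (f i.succ)) ≃ₗ[S] ↥(D i))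

/-- `L` occurs as a (simple) subquotient of `M`; for `L` simple this says that `L`
is a composition factor of `M`. -/
def IsCompFactor (L M : ModuleCat.{0} S) : Prop :=
  ∃ (A B : Submodule S ↥M), A ≤ B ∧ Nonempty ((subquot S A B) ≃ₗ[S] ↥L)

/-- `L` occurs with multiplicity `m` among the sections of a composition series of `M`. -/
def CompFactorMult (L M : ModuleCat.{0} S) (m : ℕ) : Prop :=
  ∃ (n : ℕ) (f : Fin (n + 1) → Submodule S ↥M),
    Monotone f ∧ f 0 = ⊥ ∧ f (Fin.last n) = ⊤ ∧
    (∀ i : Fin n, IsSimpleModule S (subquot S (f i.castSucc) (f i.succ))) ∧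
    Nat.card {i : Fin n // Nonempty ((subquot S (f i.castSucc) (f i.succ)) ≃ₗ[S] ↥L)} = m

/-- `P` is a projective cover of `M`: `P` is projective and there is a surjection
`P → M` whose kernel is superfluous in `P`. -/
def IsProjCover (P M : ModuleCat.{0} S) : Prop :=
  Module.Projective S ↥P ∧ ∃ π : ↥P →ₗ[S] ↥M, Function.Surjective π ∧
    ∀ N : Submodule S ↥P, N ⊔ LinearMap.ker π = ⊤ → N = ⊤

/-- `I` is an injective hull of `M`: `I` is injective and there is an injection
`M → I` with essential image. -/
def IsInjHull (I M : ModuleCat.{0} S) : Prop :=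
  Module.Injective S ↥I ∧ ∃ ι : ↥M →ₗ[S] ↥I, Function.Injective ι ∧
    ∀ N : Submodule S ↥I, N ⊓ LinearMap.range ι = ⊥ → N = ⊥

/-- The data of a quasi-hereditary algebra structure on `S` with weight poset `Λ`:
a full set `L` of pairwise non-isomorphic simple modules, their projective covers `P`
and injective hulls `I`, the standard modules `std` (largest quotient of `P lam` with
all composition factors `L mu`, `mu ≤ lam`), the costandard modules `costd`
(largest submodule of `I lam` with all composition factors `L mu`, `mu ≤ lam`),
such that `L lam` occurs exactly once in `std lam` and `P lam` is filtered by
standard modules `std mu` with `mu ≥ lam`, with `std lam` occurring exactly once. -/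
structure QHData (Λ : Type) [Fintype Λ] [PartialOrder Λ] where
  L : Λ → ModuleCat.{0} S
  P : Λ → ModuleCat.{0} S
  I : Λ → ModuleCat.{0} S
  std : Λ → ModuleCat.{0} S
  costd : Λ → ModuleCat.{0} S
  finiteL : ∀ lam, Module.Finite S ↥(L lam)
  simpleL : ∀ lam, IsSimpleModule S ↥(L lam)
  nonisoL : ∀ lam mu, lam ≠ mu → IsEmpty (↥(L lam) ≃ₗ[S] ↥(L mu))
  fullL : ∀ M : ModuleCat.{0} S, IsSimpleModule S ↥M → ∃ lam, Nonempty (↥M ≃ₗ[S] ↥(L lam))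
  projCover : ∀ lam, IsProjCover S (P lam) (L lam)
  injHull : ∀ lam, IsInjHull S (I lam) (L lam)
  stdSpec : ∀ lam, ∃ K : Submodule S ↥(P lam),
    Nonempty (↥(std lam) ≃ₗ[S] (↥(P lam) ⧸ K)) ∧
    (∀ mu, IsCompFactor S (L mu) (ModuleCat.of S (↥(P lam) ⧸ K)) → mu ≤ lam) ∧
    ∀ K' : Submodule S ↥(P lam),
      (∀ mu, IsCompFactor S (L mu) (ModuleCat.of S (↥(P lam) ⧸ K')) → mu ≤ lam) → K ≤ K'
  costdSpec : ∀ lam, ∃ V : Submodule S ↥(I lam),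
    Nonempty (↥(costd lam) ≃ₗ[S] ↥V) ∧
    (∀ mu, IsCompFactor S (L mu) (ModuleCat.of S ↥V) → mu ≤ lam) ∧
    ∀ V' : Submodule S ↥(I lam),
      (∀ mu, IsCompFactor S (L mu) (ModuleCat.of S ↥V') → mu ≤ lam) → V' ≤ V
  multOne : ∀ lam, CompFactorMult S (L lam) (std lam) 1
  projFilt : ∀ lam, ∃ (n : ℕ) (f : Fin (n + 1) → Submodule S ↥(P lam)) (g : Fin n → Λ),
    HasFiltrationWithSections S (P lam) n f (fun i => std (g i)) ∧
    (∀ i, lam ≤ g i) ∧ Nat.card {i : Fin n // g i = lam} = 1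

variable {Λ : Type} [Fintype Λ] [PartialOrder Λ]

/-- `M` has a filtration with costandard sections, i.e. `M ∈ F(∇)`. -/
def InCostdFilt (Q : QHData S Λ) (M : ModuleCat.{0} S) : Prop :=
  ∃ (n : ℕ) (f : Fin (n + 1) → Submodule S ↥M) (g : Fin n → Λ),
    HasFiltrationWithSections S M n f (fun i => Q.costd (g i))

/-- `M` has a filtration with standard sections, i.e. `M ∈ F(Δ)`. -/
def InStdFilt (Q : QHData S Λ) (M : ModuleCat.{0} S) : Prop :=
  ∃ (n : ℕ) (f : Fin (n + 1) → Submodule S ↥M) (g : Fin n → Λ),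
    HasFiltrationWithSections S M n f (fun i => Q.std (g i))

/-- `0 → N 0 → N 1 → ⋯ → N (n+1) → 0` is exact. -/
def IsExactSeq (n : ℕ) (N : Fin (n + 2) → ModuleCat.{0} S)
    (f : ∀ i : Fin (n + 1), ↥(N i.castSucc) →ₗ[S] ↥(N i.succ)) : Prop :=
  Function.Injective (f 0) ∧ Function.Surjective (f (Fin.last n)) ∧
    ∀ i : Fin n, LinearMap.range (f i.castSucc) = LinearMap.ker (f i.succ)

/-- `M` has a ∇-resolution (co-resolution by modules in `F(∇)`) of length `d`:
`0 → M → M₀ → ⋯ → M_d → 0` with each `Mᵢ ∈ F(∇)`. -/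
def GfdLE (Q : QHData S Λ) (M : ModuleCat.{0} S) (d : ℕ) : Prop :=
  ∃ (N : Fin (d + 2) → ModuleCat.{0} S)
    (f : ∀ i : Fin (d + 1), ↥(N i.castSucc) →ₗ[S] ↥(N i.succ)),
    IsExactSeq S d N f ∧ N 0 = M ∧ ∀ i : Fin (d + 1), InCostdFilt S Q (N i.succ)

/-- The ∇-filtration dimension (good filtration dimension) of a module. -/
noncomputable def gfd (Q : QHData S Λ) (M : ModuleCat.{0} S) : ℕ :=
  sInf {d | GfdLE S Q M d}

/-- `M` has a resolution `0 → M_d → ⋯ → M₀ → M → 0` with each `Mᵢ ∈ F(Δ)`. -/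
def WfdLE (Q : QHData S Λ) (M : ModuleCat.{0} S) (d : ℕ) : Prop :=
  ∃ (N : Fin (d + 2) → ModuleCat.{0} S)
    (f : ∀ i : Fin (d + 1), ↥(N i.castSucc) →ₗ[S] ↥(N i.succ)),
    IsExactSeq S d N f ∧ N (Fin.last (d + 1)) = M ∧
    ∀ i : Fin (d + 1), InStdFilt S Q (N i.castSucc)

/-- The Δ-filtration dimension of a module. -/
noncomputable def wfd (Q : QHData S Λ) (M : ModuleCat.{0} S) : ℕ :=
  sInf {d | WfdLE S Q M d}

/-- `M` has a projective resolution of length `d`. -/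
def ProjdimLE (M : ModuleCat.{0} S) (d : ℕ) : Prop :=
  ∃ (N : Fin (d + 2) → ModuleCat.{0} S)
    (f : ∀ i : Fin (d + 1), ↥(N i.castSucc) →ₗ[S] ↥(N i.succ)),
    IsExactSeq S d N f ∧ N (Fin.last (d + 1)) = M ∧
    ∀ i : Fin (d + 1), Module.Projective S ↥(N i.castSucc)

/-- The projective dimension of a module. -/
noncomputable def projdim (M : ModuleCat.{0} S) : ℕ :=
  sInf {d | ProjdimLE S M d}

/-- `M` has an injective resolution of length `d`. -/
def InjdimLE (M : ModuleCat.{0} S) (d : ℕ) : Prop :=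
  ∃ (N : Fin (d + 2) → ModuleCat.{0} S)
    (f : ∀ i : Fin (d + 1), ↥(N i.castSucc) →ₗ[S] ↥(N i.succ)),
    IsExactSeq S d N f ∧ N 0 = M ∧
    ∀ i : Fin (d + 1), Module.Injective S ↥(N i.succ)

/-- The injective dimension of a module. -/
noncomputable def injdim (M : ModuleCat.{0} S) : ℕ :=
  sInf {d | InjdimLE S M d}

/-- `gfd(S)`: the supremum of the ∇-filtration dimensions of all
finite-dimensional `S`-modules. -/
noncomputable def gfdAlg (Q : QHData S Λ) : ℕ :=
  sSup {d | ∃ M : ModuleCat.{0} S, Module.Finite S ↥M ∧ gfd S Q M = d}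

/-- `wfd(S)`: the supremum of the Δ-filtration dimensions of all
finite-dimensional `S`-modules. -/
noncomputable def wfdAlg (Q : QHData S Λ) : ℕ :=
  sSup {d | ∃ M : ModuleCat.{0} S, Module.Finite S ↥M ∧ wfd S Q M = d}

/-- The global dimension of `S`: the supremum of the projective dimensions of all
finite-dimensional `S`-modules. -/
noncomputable def globdim : ℕ :=
  sSup {d | ∃ M : ModuleCat.{0} S, Module.Finite S ↥M ∧ projdim S M = d}

/-- `Ext^n_S(A, B) ≠ 0`. -/
noncomputable def extNe (A B : ModuleCat.{0} S) (n : ℕ) : Prop :=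
  Nontrivial ↥(((Ext ℤ (ModuleCat.{0} S) n).obj (Opposite.op A)).obj B)

/-- A simple-preserving duality on `S`: a contravariant, exact, fully faithful,
additive self-functor `D` on the category of finite-dimensional `S`-modules with
`D (D M) ≅ M` and `D (L lam) ≅ L lam` for all `lam`. -/
structure Duality (Q : QHData S Λ) where
  D : ModuleCat.{0} S → ModuleCat.{0} S
  Dmap : ∀ {A B : ModuleCat.{0} S}, (↥A →ₗ[S] ↥B) → (↥(D B) →ₗ[S] ↥(D A))
  finD : ∀ M : ModuleCat.{0} S, Module.Finite S ↥M → Module.Finite S ↥(D M)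
  Did : ∀ A : ModuleCat.{0} S, Module.Finite S ↥A →
    Dmap (LinearMap.id : ↥A →ₗ[S] ↥A) = LinearMap.id
  Dcomp : ∀ {A B C : ModuleCat.{0} S}, Module.Finite S ↥A → Module.Finite S ↥B →
    Module.Finite S ↥C → ∀ (f : ↥A →ₗ[S] ↥B) (g : ↥B →ₗ[S] ↥C),
      Dmap (g ∘ₗ f) = Dmap f ∘ₗ Dmap g
  Dadd : ∀ {A B : ModuleCat.{0} S}, Module.Finite S ↥A → Module.Finite S ↥B →
    ∀ (f g : ↥A →ₗ[S] ↥B), Dmap (f + g) = Dmap f + Dmap g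
  Dfull : ∀ {A B : ModuleCat.{0} S}, Module.Finite S ↥A → Module.Finite S ↥B →
    Function.Bijective (fun f : ↥A →ₗ[S] ↥B => Dmap f)
  Dexact : ∀ {A B C : ModuleCat.{0} S}, Module.Finite S ↥A → Module.Finite S ↥B →
    Module.Finite S ↥C → ∀ (f : ↥A →ₗ[S] ↥B) (g : ↥B →ₗ[S] ↥C),
      Function.Injective f → Function.Surjective g →
      LinearMap.range f = LinearMap.ker g →
      Function.Injective (Dmap g) ∧ Function.Surjective (Dmap f) ∧
        LinearMap.range (Dmap g) = LinearMap.ker (Dmap f)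
  Dinvol : ∀ M : ModuleCat.{0} S, Module.Finite S ↥M → Nonempty (↥(D (D M)) ≃ₗ[S] ↥M)
  DL : ∀ lam, Nonempty (↥(D (Q.L lam)) ≃ₗ[S] ↥(Q.L lam))

/-- Strong property A: `mu < lam` implies `gfd (L mu) < gfd (L lam)`. -/
def StrongPropA (Q : QHData S Λ) : Prop :=
  ∀ mu lam : Λ, mu < lam → gfd S Q (Q.L mu) < gfd S Q (Q.L lam)

/-- Property A: `mu < lam` implies `gfd (L mu) ≤ gfd (L lam)`. -/
def PropA (Q : QHData S Λ) : Prop :=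
  ∀ mu lam : Λ, mu < lam → gfd S Q (Q.L mu) ≤ gfd S Q (Q.L lam)

/-- Property B: `mu < lam` implies `wfd (∇ mu) ≤ wfd (∇ lam)`. -/
def PropB (Q : QHData S Λ) : Prop :=
  ∀ mu lam : Λ, mu < lam → wfd S Q (Q.costd mu) ≤ wfd S Q (Q.costd lam)

/-- Property C: `wfd (∇ lam) = gfd S - inj (∇ lam)` for all `lam`. -/
def PropC (Q : QHData S Λ) : Prop :=
  ∀ lam : Λ, wfd S Q (Q.costd lam) = gfdAlg S Q - injdim S (Q.costd lam)

/-- Property D: `wfd (∇ lam) = wfd (L lam)` for all `lam`. -/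
def PropD (Q : QHData S Λ) : Prop :=
  ∀ lam : Λ, wfd S Q (Q.costd lam) = wfd S Q (Q.L lam)

/-- Property E: `mu < lam` implies `inj (∇ mu) ≥ inj (∇ lam)`. -/
def PropE (Q : QHData S Λ) : Prop :=
  ∀ mu lam : Λ, mu < lam → injdim S (Q.costd lam) ≤ injdim S (Q.costd mu)

/-- The partial order is minimal for the quasi-hereditary structure: whenever
`mu < lam` are adjacent, `L mu` is a composition factor of `Δ lam` or of `∇ lam`. -/
def MinimalOrder (Q : QHData S Λ) : Prop :=
  ∀ mu lam : Λ, mu < lam → (¬ ∃ nu, mu < nu ∧ nu < lam) →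
    IsCompFactor S (Q.L mu) (Q.std lam) ∨ IsCompFactor S (Q.L mu) (Q.costd lam)

/-- `S` is connected (indecomposable as an algebra, i.e. one block): the only
central idempotents are `0` and `1`. -/
def ConnectedRing : Prop :=
  ∀ c : S, c * c = c → (∀ s : S, c * s = s * c) → c = 0 ∨ c = 1

/-- A tilting module: a module in `F(Δ) ∩ F(∇)`. -/
def IsTilting (Q : QHData S Λ) (T : ModuleCat.{0} S) : Prop :=
  InStdFilt S Q T ∧ InCostdFilt S Q T

/-- The indecomposable tilting module `T(lam)`: an indecomposable tilting module in
which `L lam` occurs exactly once and all other composition factors `L mu` have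
`mu < lam`. -/
def IsIndecTilting (Q : QHData S Λ) (lam : Λ) (T : ModuleCat.{0} S) : Prop :=
  IsTilting S Q T ∧ Nontrivial ↥T ∧
    (∀ A B : Submodule S ↥T, IsCompl A B → A = ⊥ ∨ B = ⊥) ∧
    CompFactorMult S (Q.L lam) T 1 ∧
    ∀ mu, IsCompFactor S (Q.L mu) T → mu = lam ∨ mu < lam

/-- A full tilting module: a (finite-dimensional) tilting module having every
indecomposable tilting module as a direct summand. -/
def IsFullTilting (Q : QHData S Λ) (T : ModuleCat.{0} S) : Prop :=
  IsTilting S Q T ∧ Module.Finite S ↥T ∧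
    ∀ (lam : Λ) (Tl : ModuleCat.{0} S), IsIndecTilting S Q lam Tl →
      ∃ Cc : ModuleCat.{0} S, Nonempty (↥T ≃ₗ[S] (↥Tl × ↥Cc))

/-- The Ringel dual ring `S' = End_S(T)^op`. -/
abbrev RingelDualRing (T : ModuleCat.{0} S) : Type := (Module.End S ↥T)ᵐᵒᵖ

/-- `Hom_S(T, X)` is a module over `S' = End_S(T)^op` via `f • φ = φ ∘ f`. -/
instance homTModule (T X : ModuleCat.{0} S) :
    Module (RingelDualRing S T) (↥T →ₗ[S] ↥X) where
  smul a φ := φ ∘ₗ a.unop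
  one_smul φ := rfl
  mul_smul a b φ := rfl
  smul_zero a := rfl
  smul_add a φ ψ := rfl
  add_smul a b φ := by
    ext x
    show φ ((a.unop + b.unop) x) = φ (a.unop x) + φ (b.unop x)
    rw [LinearMap.add_apply, map_add]
  zero_smul φ := by
    ext x
    show φ ((0 : Module.End S ↥T) x) = 0
    rw [LinearMap.zero_apply, map_zero]

/-- The `S'`-module `Hom_S(T, X)`, i.e. the image of `X` under the functor
`F = Hom_S(T, -)`. -/
noncomputable def homTMod (T X : ModuleCat.{0} S) :
    ModuleCat.{0} (RingelDualRing S T) :=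
  ModuleCat.of (RingelDualRing S T) (↥T →ₗ[S] ↥X)

/-- `Q'` is a Ringel dual quasi-hereditary structure for `(Q, T)`:
`T` is a full tilting module, `Q'` is a quasi-hereditary structure on
`S' = End_S(T)^op` for the opposite poset, and its standard modules are
`Δ'(lam) = Hom_S(T, ∇(lam))`. -/
def IsRingelDualData (Q : QHData S Λ) (T : ModuleCat.{0} S)
    (Q' : QHData (RingelDualRing S T) Λᵒᵈ) : Prop :=
  IsFullTilting S Q T ∧
    ∀ lam : Λ, Nonempty
      (↥(Q'.std (OrderDual.toDual lam)) ≃ₗ[RingelDualRing S T]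
        (↥T →ₗ[S] ↥(Q.costd lam)))

/-- `0 → T_d → ⋯ → T_0 → M → 0` exact with all `T_i` tilting modules. -/
def TiltResLE (Q : QHData S Λ) (M : ModuleCat.{0} S) (d : ℕ) : Prop :=
  ∃ (N : Fin (d + 2) → ModuleCat.{0} S)
    (f : ∀ i : Fin (d + 1), ↥(N i.castSucc) →ₗ[S] ↥(N i.succ)),
    IsExactSeq S d N f ∧ N (Fin.last (d + 1)) = M ∧
    ∀ i : Fin (d + 1), IsTilting S Q (N i.castSucc)

/-- An idempotent `e` is primitive if it is nonzero and is not the sum of two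
nonzero orthogonal idempotents. -/
def IsPrimitiveIdempotent (e : S) : Prop :=
  e * e = e ∧ e ≠ 0 ∧ ∀ a b : S, a * a = a → b * b = b → a * b = 0 → b * a = 0 →
    e = a + b → a = 0 ∨ b = 0

/-- The additive subgroup `e•M = {m | e • m = m}` of `M` (for `e` idempotent). -/
def cornerSet (eG : S) (M : ModuleCat.{0} S) : AddSubgroup ↥M where
  carrier := {m | eG • m = m}
  add_mem' := by
    intro a b ha hb
    simp only [Set.mem_setOf_eq] at *
    rw [smul_add, ha, hb]
  zero_mem' := by
    simp only [Set.mem_setOf_eq]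
    rw [smul_zero]
  neg_mem' := by
    intro a ha
    simp only [Set.mem_setOf_eq] at *
    rw [smul_neg, ha]

/-- The `R`-module structure on `e•M`, where `ι : R → S` identifies `R` with the
corner ring `eSe` (as a non-unital ring, with `ι 1 = e`). -/
def cornerModuleStructure (R : Type) [Ring R] (ι : R →ₙ+* S) (eG : S)
    (hone : ι 1 = eG) (hrange : ∀ r : R, eG * ι r * eG = ι r)
    (M : ModuleCat.{0} S) : Module R ↥(cornerSet S eG M) where
  smul r m := ⟨ι r • (m : ↥M), by
    have hm : eG • (m : ↥M) = (m : ↥M) := m.2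
    show eG • (ι r • (m : ↥M)) = ι r • (m : ↥M)
    have h : eG • (ι r • (m : ↥M)) = (eG * ι r * eG) • (m : ↥M) := by
      rw [mul_assoc, mul_smul, mul_smul, hm]
    rw [h, hrange]⟩
  one_smul m := by
    apply Subtype.ext
    show ι 1 • (m : ↥M) = (m : ↥M)
    rw [hone]
    exact m.2
  mul_smul r s m := by
    apply Subtype.ext
    show ι (r * s) • (m : ↥M) = ι r • (ι s • (m : ↥M))
    rw [map_mul, mul_smul]
  smul_zero r := by
    apply Subtype.ext
    show ι r • (0 : ↥M) = 0
    rw [smul_zero]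
  smul_add r m n := by
    apply Subtype.ext
    show ι r • ((m : ↥M) + (n : ↥M)) = ι r • (m : ↥M) + ι r • (n : ↥M)
    rw [smul_add]
  add_smul r s m := by
    apply Subtype.ext
    show ι (r + s) • (m : ↥M) = ι r • (m : ↥M) + ι s • (m : ↥M)
    rw [map_add, add_smul]
  zero_smul m := by
    apply Subtype.ext
    show ι 0 • (m : ↥M) = 0
    rw [map_zero, zero_smul]

/-- The `R`-module `e•M`, where `R ≅ eSe` via `ι`. -/
noncomputable def cornerMod (R : Type) [Ring R] (ι : R →ₙ+* S) (eG : S)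
    (hone : ι 1 = eG) (hrange : ∀ r : R, eG * ι r * eG = ι r)
    (M : ModuleCat.{0} S) : ModuleCat.{0} R :=
  @ModuleCat.of R _ ↥(cornerSet S eG M) _
    (cornerModuleStructure S R ι eG hone hrange M)

end QHPaper

namespace QHProof
open CategoryTheory

section ext
variable {S : Type} [Ring S]

/-- short exact sequence of modules -/
structure SES {A B C : Type} [AddCommGroup A] [AddCommGroup B] [AddCommGroup C]
    [Module S A] [Module S B] [Module S C] (f : A →ₗ[S] B) (g : B →ₗ[S] C) : Prop where
  inj : Function.Injective f
  surj : Function.Surjective g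
  ex : LinearMap.range f = LinearMap.ker g

/-- vanishing of Ext -/
def EV (S : Type) [Ring S] (i : ℕ) (A B : Type) [AddCommGroup A] [AddCommGroup B]
    [Module S A] [Module S B] : Prop :=
  Subsingleton (Abelian.Ext (ModuleCat.of S A) (ModuleCat.of S B) i)

variable {A B C N M : Type} [AddCommGroup A] [AddCommGroup B] [AddCommGroup C]
    [Module S A] [Module S B] [Module S C] [AddCommGroup N] [AddCommGroup M]
    [Module S N] [Module S M]

theorem SES.comp_zero {f : A →ₗ[S] B} {g : B →ₗ[S] C} (h : SES f g) : g ∘ₗ f = 0 := by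
  ext x
  have : f x ∈ LinearMap.ker g := h.ex ▸ LinearMap.mem_range_self f x
  simpa using this

theorem SES.sub (K : Submodule S B) : SES K.subtype K.mkQ :=
  ⟨K.injective_subtype, K.mkQ_surjective, by simp⟩

theorem SES.ofInj {f : A →ₗ[S] B} (h : Function.Injective f) :
    SES f (LinearMap.range f).mkQ :=
  ⟨h, Submodule.mkQ_surjective _, by simp⟩

theorem SES.ofSurj {g : B →ₗ[S] C} (h : Function.Surjective g) :
    SES (LinearMap.ker g).subtype g :=
  ⟨Submodule.injective_subtype _, h, by simp⟩

theorem SES.sc {f : A →ₗ[S] B} {g : B →ₗ[S] C} (h : SES f g) :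
    ∃ w, (ShortComplex.mk (ModuleCat.ofHom f) (ModuleCat.ofHom g) w).ShortExact := by
  refine ⟨by ext x; exact LinearMap.congr_fun h.comp_zero x, ?_⟩
  have hm : Mono (ModuleCat.ofHom f) := (ModuleCat.mono_iff_injective _).2 h.inj
  have he : Epi (ModuleCat.ofHom g) := (ModuleCat.epi_iff_surjective _).2 h.surj
  refine ShortComplex.ShortExact.mk ?_
  rw [ShortComplex.moduleCat_exact_iff]
  intro x hx
  have : x ∈ LinearMap.ker g := hx
  rw [← h.ex] at this
  exact this

theorem EV.iff_zero {i : ℕ} : EV S i A B ↔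
    ∀ x : Abelian.Ext (ModuleCat.of S A) (ModuleCat.of S B) i, x = 0 := by
  constructor
  · intro h x
    exact @Subsingleton.elim _ h _ _
  · intro h
    exact ⟨fun x y => (h x).trans (h y).symm⟩

theorem EV.zero_iff : EV S 0 A B ↔ ∀ f : A →ₗ[S] B, f = 0 := by
  rw [EV.iff_zero]
  constructor
  · intro h f
    have := h (Abelian.Ext.mk₀ (ModuleCat.ofHom f))
    rw [Abelian.Ext.mk₀_eq_zero_iff] at this
    have := congrArg ModuleCat.Hom.hom this
    simpa using this
  · intro h x
    obtain ⟨f, rfl⟩ := Abelian.Ext.addEquiv₀.symm.surjective x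
    have : f = 0 := by
      ext y
      exact LinearMap.congr_fun (h f.hom) y
    rw [this]; simp

/-- retract in second variable -/
theorem EV.retract2 {i : ℕ} (r : B →ₗ[S] A) (s : A →ₗ[S] B) (h : r ∘ₗ s = LinearMap.id)
    (hB : EV S i M B) : EV S i M A := by
  rw [EV.iff_zero] at *
  intro x
  have h1 := hB (x.comp (Abelian.Ext.mk₀ (ModuleCat.ofHom s)) (add_zero i))
  have h2 : (x.comp (Abelian.Ext.mk₀ (ModuleCat.ofHom s)) (add_zero i)).comp
    (Abelian.Ext.mk₀ (ModuleCat.ofHom r)) (add_zero i) = x := by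
    rw [Abelian.Ext.comp_assoc_of_third_deg_zero, Abelian.Ext.mk₀_comp_mk₀, ← ModuleCat.ofHom_comp, h]
    exact Abelian.Ext.comp_mk₀_id x
  rw [← h2, h1]; simp

theorem EV.retract1 {i : ℕ} (r : B →ₗ[S] A) (s : A →ₗ[S] B) (h : r ∘ₗ s = LinearMap.id)
    (hB : EV S i B N) : EV S i A N := by
  rw [EV.iff_zero] at *
  intro x
  have h1 := hB ((Abelian.Ext.mk₀ (ModuleCat.ofHom r)).comp x (zero_add i))
  have h2 : (Abelian.Ext.mk₀ (ModuleCat.ofHom s)).comp ((Abelian.Ext.mk₀ (ModuleCat.ofHom r)).comp x (zero_add i)) (zero_add i) = x := by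
    rw [← Abelian.Ext.comp_assoc_of_second_deg_zero, Abelian.Ext.mk₀_comp_mk₀, ← ModuleCat.ofHom_comp, h]
    exact Abelian.Ext.mk₀_id_comp x
  rw [← h2, h1]; simp

theorem EV.congr1 {i : ℕ} (e : A ≃ₗ[S] B) (hB : EV S i B N) : EV S i A N :=
  EV.retract1 e.symm.toLinearMap e.toLinearMap (by ext; simp) hB

theorem EV.congr2 {i : ℕ} (e : A ≃ₗ[S] B) (hB : EV S i M B) : EV S i M A :=
  EV.retract2 e.symm.toLinearMap e.toLinearMap (by ext; simp) hB

section les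
variable {f : A →ₗ[S] B} {g : B →ₗ[S] C}

theorem SES.cov2 (h : SES f g) {i : ℕ} (h1 : EV S i M A) (h3 : EV S i M C) : EV S i M B := by
  obtain ⟨w, hs⟩ := h.sc
  rw [EV.iff_zero] at *
  intro x
  obtain ⟨y, hy⟩ := Abelian.Ext.covariant_sequence_exact₂ _ hs x (h3 _)
  rw [← hy, h1 y]; simp

theorem SES.cov3 (h : SES f g) {i : ℕ} (h2 : EV S i M B) (h1 : EV S (i + 1) M A) : EV S i M C := by
  obtain ⟨w, hs⟩ := h.sc
  rw [EV.iff_zero] at *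
  intro x
  obtain ⟨y, hy⟩ := Abelian.Ext.covariant_sequence_exact₃ _ hs x rfl (h1 _)
  rw [← hy, h2 y]; simp

theorem SES.cov1 (h : SES f g) {i : ℕ} (h3 : EV S i M C) (h2 : EV S (i + 1) M B) : EV S (i + 1) M A := by
  obtain ⟨w, hs⟩ := h.sc
  rw [EV.iff_zero] at *
  intro x
  obtain ⟨y, hy⟩ := Abelian.Ext.covariant_sequence_exact₁ _ hs x (h2 _) rfl
  rw [← hy, h3 y]; simp

theorem SES.con2 (h : SES f g) {i : ℕ} (h1 : EV S i A N) (h3 : EV S i C N) : EV S i B N := by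
  obtain ⟨w, hs⟩ := h.sc
  rw [EV.iff_zero] at *
  intro x
  obtain ⟨y, hy⟩ := Abelian.Ext.contravariant_sequence_exact₂ hs _ x (h1 _)
  rw [← hy, h3 y]; simp

theorem SES.con1 (h : SES f g) {i : ℕ} (h2 : EV S i B N) (h3 : EV S (i + 1) C N) : EV S i A N := by
  obtain ⟨w, hs⟩ := h.sc
  rw [EV.iff_zero] at *
  intro x
  obtain ⟨y, hy⟩ := Abelian.Ext.contravariant_sequence_exact₁ hs _ x (add_comm 1 i) (h3 _)
  rw [← hy, h2 y]; simp

theorem SES.con3 (h : SES f g) {i : ℕ} (h1 : EV S i A N) (h2 : EV S (i + 1) B N) : EV S (i + 1) C N := by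
  obtain ⟨w, hs⟩ := h.sc
  rw [EV.iff_zero] at *
  intro x
  obtain ⟨y, hy⟩ := Abelian.Ext.contravariant_sequence_exact₃ hs _ x (h2 _) (add_comm 1 i)
  rw [← hy, h1 y]; simp

theorem SES.lift (h : SES f g) (h1 : EV S 1 M A) (u : M →ₗ[S] C) : ∃ v : M →ₗ[S] B, g ∘ₗ v = u := by
  obtain ⟨w, hs⟩ := h.sc
  rw [EV.iff_zero] at *
  obtain ⟨y, hy⟩ := Abelian.Ext.covariant_sequence_exact₃ _ hs
    (Abelian.Ext.mk₀ (ModuleCat.ofHom u)) rfl (h1 _)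
  obtain ⟨v, rfl⟩ := Abelian.Ext.addEquiv₀.symm.surjective y
  refine ⟨v.hom, ?_⟩
  have : Abelian.Ext.mk₀ (v ≫ ModuleCat.ofHom g) = Abelian.Ext.mk₀ (ModuleCat.ofHom u) := by
    rw [← hy, ← Abelian.Ext.mk₀_comp_mk₀]; rfl
  have := (Abelian.Ext.mk₀_bijective _ _).1 this
  have := congrArg ModuleCat.Hom.hom this
  simpa using this

theorem SES.extend (h : SES f g) (h3 : EV S 1 C N) (u : A →ₗ[S] N) : ∃ v : B →ₗ[S] N, v ∘ₗ f = u := by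
  obtain ⟨w, hs⟩ := h.sc
  rw [EV.iff_zero] at *
  obtain ⟨y, hy⟩ := Abelian.Ext.contravariant_sequence_exact₁ hs _
    (Abelian.Ext.mk₀ (ModuleCat.ofHom u)) rfl (h3 _)
  obtain ⟨v, rfl⟩ := Abelian.Ext.addEquiv₀.symm.surjective y
  refine ⟨v.hom, ?_⟩
  have : Abelian.Ext.mk₀ (ModuleCat.ofHom f ≫ v) = Abelian.Ext.mk₀ (ModuleCat.ofHom u) := by
    rw [← hy, ← Abelian.Ext.mk₀_comp_mk₀]; rfl
  have := (Abelian.Ext.mk₀_bijective _ _).1 this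
  have := congrArg ModuleCat.Hom.hom this
  simpa using this

theorem SES.of_lift (h : SES f g) (h2 : EV S 1 M B) (hl : ∀ u : M →ₗ[S] C, ∃ v : M →ₗ[S] B, g ∘ₗ v = u) :
    EV S 1 M A := by
  obtain ⟨w, hs⟩ := h.sc
  rw [EV.iff_zero] at *
  intro x
  obtain ⟨y, hy⟩ := Abelian.Ext.covariant_sequence_exact₁ _ hs x (h2 _) (n₀ := 0) rfl
  obtain ⟨u, rfl⟩ := Abelian.Ext.addEquiv₀.symm.surjective y
  obtain ⟨v, hv⟩ := hl u.hom
  have e : Abelian.Ext.addEquiv₀.symm u =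
      (Abelian.Ext.mk₀ (ModuleCat.ofHom v)).comp (Abelian.Ext.mk₀ (ModuleCat.ofHom g)) (add_zero 0) := by
    rw [Abelian.Ext.mk₀_comp_mk₀, ← ModuleCat.ofHom_comp, hv]; rfl
  rw [← hy, e]
  exact (Abelian.Ext.comp_assoc_of_second_deg_zero _ _ _ _).trans (by
    have := hs.comp_extClass
    simp at this
    rw [this]; simp)

theorem SES.of_extend (h : SES f g) (h2 : EV S 1 B N) (hl : ∀ u : A →ₗ[S] N, ∃ v : B →ₗ[S] N, v ∘ₗ f = u) :
    EV S 1 C N := by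
  obtain ⟨w, hs⟩ := h.sc
  rw [EV.iff_zero] at *
  intro x
  obtain ⟨y, hy⟩ := Abelian.Ext.contravariant_sequence_exact₃ hs _ x (h2 _) (n₀ := 0) rfl
  obtain ⟨u, rfl⟩ := Abelian.Ext.addEquiv₀.symm.surjective y
  obtain ⟨v, hv⟩ := hl u.hom
  have e : Abelian.Ext.addEquiv₀.symm u =
      (Abelian.Ext.mk₀ (ModuleCat.ofHom f)).comp (Abelian.Ext.mk₀ (ModuleCat.ofHom v)) (add_zero 0) := by
    rw [Abelian.Ext.mk₀_comp_mk₀, ← ModuleCat.ofHom_comp, hv]; rfl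
  rw [← hy, e]
  exact (Abelian.Ext.comp_assoc_of_second_deg_zero _ _ _ _).symm.trans (by
    have := hs.extClass_comp
    simp at this
    rw [this]; simp)

end les

theorem EV.proj (i : ℕ) [Module.Projective S A] : EV S (i + 1) A B := by
  have : Projective (ModuleCat.of S A) := (IsProjective.iff_projective A).1 inferInstance
  exact Abelian.Ext.subsingleton_of_projective _ _ i

theorem EV.inj (i : ℕ) (hB : Module.Injective S B) : EV S (i + 1) A B := by
  have : Injective (ModuleCat.of S B) := (Module.injective_iff_injective_object S B).1 hB
  exact Abelian.Ext.subsingleton_of_injective _ _ i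

theorem EV.of_sub1 [Subsingleton A] (i : ℕ) : EV S i A B := by
  rw [EV.iff_zero]
  intro x
  have h : ModuleCat.ofHom (LinearMap.id : A →ₗ[S] A) = 0 := by
    ext y; exact Subsingleton.elim _ _
  rw [← Abelian.Ext.mk₀_id_comp x]
  have h' : 𝟙 (ModuleCat.of S A) = 0 := h
  rw [h']; simp

theorem EV.of_sub2 [Subsingleton B] (i : ℕ) : EV S i A B := by
  rw [EV.iff_zero]
  intro x
  have h : ModuleCat.ofHom (LinearMap.id : B →ₗ[S] B) = 0 := by
    ext y; exact Subsingleton.elim _ _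
  rw [← Abelian.Ext.comp_mk₀_id x]
  have h' : 𝟙 (ModuleCat.of S B) = 0 := h
  rw [h']; simp

end ext
end QHProof

namespace QHProof
open CategoryTheory QHPaper
section cfs
variable {S : Type} [Ring S] {Λ : Type} [Fintype Λ] [PartialOrder Λ]
variable {A B C X Y : Type} [AddCommGroup A] [AddCommGroup B] [AddCommGroup C]
    [Module S A] [Module S B] [Module S C] [AddCommGroup X] [AddCommGroup Y]
    [Module S X] [Module S Y]

theorem SES.factor {f : A →ₗ[S] B} {g : B →ₗ[S] C} (h : SES f g) (u : X →ₗ[S] B)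
    (hu : g ∘ₗ u = 0) : ∃ v : X →ₗ[S] A, f ∘ₗ v = u := by
  have hm : ∀ x, u x ∈ LinearMap.range f := by
    intro x
    rw [h.ex]
    exact LinearMap.congr_fun hu x
  refine ⟨(LinearEquiv.ofInjective f h.inj).symm.toLinearMap ∘ₗ u.codRestrict _ hm, ?_⟩
  ext x
  have := congrArg Subtype.val
    ((LinearEquiv.ofInjective f h.inj).apply_symm_apply (u.codRestrict _ hm x))
  simpa using this

theorem SES.cofactor {f : A →ₗ[S] B} {g : B →ₗ[S] C} (h : SES f g) (u : B →ₗ[S] X)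
    (hu : u ∘ₗ f = 0) : ∃ v : C →ₗ[S] X, v ∘ₗ g = u := by
  have hk : LinearMap.ker g ≤ LinearMap.ker u := by
    rw [← h.ex]
    rintro _ ⟨a, rfl⟩
    exact LinearMap.congr_fun hu a
  refine ⟨(LinearMap.ker g).liftQ u hk ∘ₗ
    (g.quotKerEquivOfSurjective h.surj).symm.toLinearMap, ?_⟩
  ext x
  have : (g.quotKerEquivOfSurjective h.surj).symm (g x) = (LinearMap.ker g).mkQ x := by
    rw [LinearEquiv.symm_apply_eq]; rfl
  simp only [LinearMap.comp_apply, LinearEquiv.coe_coe, this]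
  simp

/-- `L κ` is a composition factor of `X`. -/
def cf (Q : QHData S Λ) (κ : Λ) (X : Type) [AddCommGroup X] [Module S X] : Prop :=
  ∃ f : Q.P κ →ₗ[S] X, f ≠ 0

variable {Q : QHData S Λ} {κ μ : Λ}

theorem projP (Q : QHData S Λ) (κ : Λ) : Module.Projective S (Q.P κ) := (Q.projCover κ).1

theorem cf.of_inj (f : X →ₗ[S] Y) (hf : Function.Injective f) (h : cf Q κ X) : cf Q κ Y := by
  obtain ⟨u, hu⟩ := h
  refine ⟨f ∘ₗ u, fun h0 => hu ?_⟩
  ext x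
  apply hf
  simpa using LinearMap.congr_fun h0 x

theorem cf.of_surj (f : X →ₗ[S] Y) (hf : Function.Surjective f) (h : cf Q κ Y) : cf Q κ X := by
  obtain ⟨u, hu⟩ := h
  have := projP Q κ
  obtain ⟨v, hv⟩ := Module.projective_lifting_property f u hf
  refine ⟨v, fun h0 => hu ?_⟩
  rw [← hv, h0]; simp

theorem cf.congr (e : X ≃ₗ[S] Y) (h : cf Q κ X) : cf Q κ Y :=
  h.of_inj e.toLinearMap e.injective

theorem cf.ses {f : A →ₗ[S] B} {g : B →ₗ[S] C} (h : SES f g) (hB : cf Q κ B) :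
    cf Q κ A ∨ cf Q κ C := by
  obtain ⟨u, hu⟩ := hB
  by_cases h0 : g ∘ₗ u = 0
  · obtain ⟨v, hv⟩ := h.factor u h0
    refine Or.inl ⟨v, fun h1 => hu ?_⟩
    rw [← hv, h1]; simp
  · exact Or.inr ⟨_, h0⟩

theorem not_cf_sub [Subsingleton X] : ¬ cf Q κ X := by
  rintro ⟨f, hf⟩
  exact hf (by ext x; exact Subsingleton.elim _ _)

theorem cover_coatom (Q : QHData S Λ) {κ : Λ} {π : Q.P κ →ₗ[S] Q.L κ}
    (hs : Function.Surjective π) : IsCoatom (LinearMap.ker π) := by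
  have := Q.simpleL κ
  exact LinearMap.isCoatom_ker_of_surjective hs

theorem cover_ker_le {π : Q.P κ →ₗ[S] Q.L κ}
    (hs : Function.Surjective π)
    (hsup : ∀ N : Submodule S (Q.P κ), N ⊔ LinearMap.ker π = ⊤ → N = ⊤)
    (N : Submodule S (Q.P κ)) (hN : N ≠ ⊤) : N ≤ LinearMap.ker π := by
  by_contra hle
  have hco := cover_coatom Q hs
  apply hN
  apply hsup
  apply hco.2
  exact right_lt_sup.2 hle

theorem simple_of_cf (hX : IsSimpleModule S X) (h : cf Q κ X) : Nonempty (X ≃ₗ[S] Q.L κ) := by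
  obtain ⟨f, hf⟩ := h
  obtain ⟨hp, π, hs, hsup⟩ := Q.projCover κ
  have hfs : Function.Surjective f := by
    rcases LinearMap.surjective_or_eq_zero f with h | h
    · exact h
    · exact absurd h hf
  have hco : IsCoatom (LinearMap.ker f) := LinearMap.isCoatom_ker_of_surjective hfs
  have hle := cover_ker_le hs hsup (LinearMap.ker f) hco.1
  have heq : LinearMap.ker f = LinearMap.ker π :=
    (hco.le_iff.1 hle).resolve_left (cover_coatom Q hs).1 |>.symm
  exact ⟨(f.quotKerEquivOfSurjective hfs).symm ≪≫ₗ Submodule.quotEquivOfEq _ _ heq ≪≫ₗ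
    π.quotKerEquivOfSurjective hs⟩

theorem cf_self (Q : QHData S Λ) (κ : Λ) : cf Q κ (Q.L κ) := by
  obtain ⟨hp, π, hs, hsup⟩ := Q.projCover κ
  refine ⟨π, fun h => ?_⟩
  have := (Q.simpleL κ).nontrivial
  obtain ⟨x, hx⟩ := exists_ne (0 : Q.L κ)
  obtain ⟨y, rfl⟩ := hs x
  exact hx (by rw [h]; rfl)

theorem cf_L : cf Q κ (Q.L μ) ↔ κ = μ := by
  constructor
  · intro h
    obtain ⟨e⟩ := simple_of_cf (Q.simpleL μ) h
    by_contra hne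
    exact (Q.nonisoL μ κ (Ne.symm hne)).false e
  · rintro rfl
    exact cf_self Q κ

theorem cf_of_iso (e : X ≃ₗ[S] Q.L κ) : cf Q κ X := (cf_self Q κ).congr e.symm

theorem cf_iff : cf Q κ X ↔ IsCompFactor S (Q.L κ) (ModuleCat.of S X) := by
  constructor
  · rintro ⟨f, hf⟩
    obtain ⟨hp, π, hs, hsup⟩ := Q.projCover κ
    have hk : LinearMap.ker f ≤ LinearMap.ker π :=
      cover_ker_le hs hsup _ (fun h => hf (LinearMap.ker_eq_top.1 h))
    refine ⟨(LinearMap.ker π).map f, LinearMap.range f, LinearMap.map_le_range, ?_⟩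
    let q : Q.P κ →ₗ[S] (LinearMap.range f ⧸ (((LinearMap.ker π).map f).comap
      (LinearMap.range f).subtype)) := Submodule.mkQ _ ∘ₗ f.rangeRestrict
    have hq : Function.Surjective q :=
      (Submodule.mkQ_surjective _).comp f.surjective_rangeRestrict
    have hker : LinearMap.ker q = LinearMap.ker π := by
      ext x
      simp only [q, LinearMap.mem_ker, LinearMap.comp_apply, Submodule.mkQ_apply,
        Submodule.Quotient.mk_eq_zero, Submodule.mem_comap, Submodule.mem_map]
      constructor
      · rintro ⟨y, hy, hyx⟩
        have : x - y ∈ LinearMap.ker f := by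
          simp at hyx
          simp [hyx]
        have := hk this
        simp [hy] at this
        simpa [sub_eq_zero, hy] using this
      · intro hx
        exact ⟨x, hx, rfl⟩
    exact ⟨(q.quotKerEquivOfSurjective hq).symm ≪≫ₗ Submodule.quotEquivOfEq _ _ hker ≪≫ₗ
      π.quotKerEquivOfSurjective hs⟩
  · rintro ⟨A, B, hAB, ⟨e⟩⟩
    have h1 : cf Q κ (subquot S A B) := cf_of_iso e
    have h2 : cf Q κ B := h1.of_surj (Submodule.mkQ _) (Submodule.mkQ_surjective _)
    exact h2.of_inj B.subtype B.injective_subtype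

theorem fl_of_finite [IsArtinianRing S] [Module.Finite S X] :
    IsFiniteLength S X := by
  rw [isFiniteLength_iff_isNoetherian_isArtinian]
  exact ⟨inferInstance, inferInstance⟩

theorem devissage [IsArtinianRing S] (Q : QHData S Λ)
    (p : ∀ (X : Type) [AddCommGroup X] [Module S X], Prop)
    (hsub : ∀ (X : Type) [AddCommGroup X] [Module S X], Subsingleton X → p X)
    (hiso : ∀ (X Y : Type) [AddCommGroup X] [Module S X] [AddCommGroup Y] [Module S Y],
      (X ≃ₗ[S] Y) → p Y → p X)
    (hext : ∀ (B : Type) [AddCommGroup B] [Module S B] (N : Submodule S B),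
      p N → p (B ⧸ N) → p B)
    (X : Type) [AddCommGroup X] [Module S X] [Module.Finite S X]
    (h : ∀ κ, cf Q κ X → p (Q.L κ)) : p X := by
  have hfl : IsFiniteLength S X := fl_of_finite
  induction hfl with
  | of_subsingleton => exact hsub _ inferInstance
  | @of_simple_quotient M _ _ N hsimp hN ih =>
    apply hext M N
    · exact ih fun κ hκ => h κ (hκ.of_inj N.subtype N.injective_subtype)
    · obtain ⟨κ, ⟨e⟩⟩ := Q.fullL (ModuleCat.of S (M ⧸ N)) hsimp
      have e' : (M ⧸ N) ≃ₗ[S] Q.L κ := e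
      exact hiso _ _ e' (h κ ((cf_of_iso e').of_surj N.mkQ N.mkQ_surjective))

/-- devissage for Ext, first variable -/
theorem EV.dev1 [IsArtinianRing S] (Q : QHData S Λ) [Module.Finite S X] {i : ℕ}
    (h : ∀ κ, cf Q κ X → EV S i (Q.L κ) Y) : EV S i X Y :=
  devissage Q (fun X _ _ => EV S i X Y) (fun _ _ _ _ => EV.of_sub1 i)
    (fun _ _ _ _ _ _ e h => EV.congr1 e h)
    (fun _ _ _ N h1 h2 => (SES.sub N).con2 h1 h2) X h

theorem EV.dev2 [IsArtinianRing S] (Q : QHData S Λ) [Module.Finite S X] {i : ℕ}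
    (h : ∀ κ, cf Q κ X → EV S i Y (Q.L κ)) : EV S i Y X :=
  devissage Q (fun X _ _ => EV S i Y X) (fun _ _ _ _ => EV.of_sub2 i)
    (fun _ _ _ _ _ _ e h => EV.congr2 e h)
    (fun _ _ _ N h1 h2 => (SES.sub N).cov2 h1 h2) X h

theorem sub_of_no_cf [IsArtinianRing S] (Q : QHData S Λ) [Module.Finite S X]
    (h : ∀ κ, ¬ cf Q κ X) : Subsingleton X :=
  devissage Q (fun X _ _ => Subsingleton X) (fun X _ _ h => h)
    (fun _ _ _ _ _ _ e h => e.injective.subsingleton)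
    (fun B _ _ N h1 h2 => by
      refine subsingleton_of_forall_eq 0 fun b => ?_
      have hb : b ∈ N := by
        rw [← Submodule.Quotient.mk_eq_zero]
        exact Subsingleton.elim _ _
      exact congrArg Subtype.val (Subsingleton.elim (⟨b, hb⟩ : N) 0)) X
    (fun κ hκ => absurd hκ (h κ))

/-- a nonzero finite module has a simple submodule -/
theorem exists_simple_sub [IsArtinianRing S] (Q : QHData S Λ) [Module.Finite S X]
    [Nontrivial X] : ∃ (κ : Λ) (f : Q.L κ →ₗ[S] X), Function.Injective f := by
  obtain ⟨N, hN, -⟩ := (eq_bot_or_exists_atom_le (⊤ : Submodule S X)).resolve_left top_ne_bot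
  have : IsSimpleModule S N := isSimpleModule_iff_isAtom.2 hN
  obtain ⟨κ, ⟨e⟩⟩ := Q.fullL (ModuleCat.of S N) this
  exact ⟨κ, N.subtype ∘ₗ e.symm.toLinearMap,
    N.injective_subtype.comp e.symm.injective⟩

/-- a nonzero finite module has a simple quotient -/
theorem exists_simple_quot [IsArtinianRing S] (Q : QHData S Λ) [Module.Finite S X]
    [Nontrivial X] : ∃ (κ : Λ) (f : X →ₗ[S] Q.L κ), Function.Surjective f := by
  obtain ⟨N, hN, -⟩ := (eq_top_or_exists_le_coatom (⊥ : Submodule S X)).resolve_left bot_ne_top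
  have : IsSimpleModule S (X ⧸ N) := isSimpleModule_iff_isCoatom.2 hN
  obtain ⟨κ, ⟨e⟩⟩ := Q.fullL (ModuleCat.of S (X ⧸ N)) this
  exact ⟨κ, e.toLinearMap ∘ₗ N.mkQ, e.surjective.comp N.mkQ_surjective⟩

theorem finP (Q : QHData S Λ) (κ : Λ) : Module.Finite S (Q.P κ) := by
  obtain ⟨hp, π, hs, hsup⟩ := Q.projCover κ
  have := (Q.simpleL κ).nontrivial
  obtain ⟨x, hx⟩ := exists_ne (0 : Q.L κ)
  obtain ⟨y, rfl⟩ := hs x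
  have h1 : Submodule.span S {y} = ⊤ := by
    by_contra h
    have := cover_ker_le hs hsup _ h (Submodule.mem_span_singleton_self y)
    exact hx this
  exact ⟨⟨{y}, by simpa using h1⟩⟩

theorem L_inj_or_zero (f : Q.L κ →ₗ[S] X) (hf : f ≠ 0) : Function.Injective f := by
  have := Q.simpleL κ
  exact (LinearMap.injective_or_eq_zero f).resolve_right hf

end cfs
end QHProof

namespace QHProof
open CategoryTheory QHPaper
section stds
variable {S : Type} [Ring S] {Λ : Type} [Fintype Λ] [PartialOrder Λ]
variable {A B C X Y : Type} [AddCommGroup A] [AddCommGroup B] [AddCommGroup C]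
    [Module S A] [Module S B] [Module S C] [AddCommGroup X] [AddCommGroup Y]
    [Module S X] [Module S Y]

theorem SES.subq {A B : Submodule S X} (h : A ≤ B) :
    SES (Submodule.inclusion h) (Submodule.comap B.subtype A).mkQ :=
  ⟨Submodule.inclusion_injective h, Submodule.mkQ_surjective _, by
    rw [Submodule.range_inclusion, Submodule.ker_mkQ]⟩

theorem std_cover (Q : QHData S Λ) (l : Λ) : ∃ p : Q.P l →ₗ[S] Q.std l,
    Function.Surjective p ∧ (∀ κ, cf Q κ (Q.std l) → κ ≤ l) ∧
    ∀ (Y : Type) [AddCommGroup Y] [Module S Y] (u : Q.P l →ₗ[S] Y), Function.Surjective u →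
      (∀ κ, cf Q κ Y → κ ≤ l) → ∃ v : Q.std l →ₗ[S] Y, v ∘ₗ p = u := by
  obtain ⟨K, ⟨e⟩, h1, h2⟩ := Q.stdSpec l
  have hp : Function.Surjective (e.symm.toLinearMap ∘ₗ K.mkQ) :=
    e.symm.surjective.comp K.mkQ_surjective
  refine ⟨e.symm.toLinearMap ∘ₗ K.mkQ, hp, ?_, ?_⟩
  · intro κ hκ
    exact h1 κ (cf_iff.1 (hκ.congr e))
  · intro Y _ _ u hu hY
    have hK : K ≤ LinearMap.ker u := by
      apply h2
      intro κ hκ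
      exact hY κ ((cf_iff.2 hκ).congr (u.quotKerEquivOfSurjective hu))
    refine ⟨K.liftQ u hK ∘ₗ e.toLinearMap, ?_⟩
    ext x
    simp

theorem cf_std_le {Q : QHData S Λ} {κ l : Λ} (h : cf Q κ (Q.std l)) : κ ≤ l := by
  obtain ⟨p, _, h1, _⟩ := std_cover Q l
  exact h1 κ h

theorem finStd (Q : QHData S Λ) (l : Λ) : Module.Finite S (Q.std l) := by
  obtain ⟨p, hp, _, _⟩ := std_cover Q l
  have := finP Q l
  exact Module.Finite.of_surjective p hp

theorem hom_std {Q : QHData S Λ} {l : Λ} (h : ¬ cf Q l X) : EV S 0 (Q.std l) X := by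
  rw [EV.zero_iff]
  intro f
  obtain ⟨p, hp, _, _⟩ := std_cover Q l
  by_contra hf
  refine h ⟨f ∘ₗ p, fun h0 => hf ?_⟩
  ext x
  obtain ⟨y, rfl⟩ := hp x
  exact LinearMap.congr_fun h0 y

theorem filt_index {n : ℕ} (f : Fin (n + 1) → Submodule S Y) (h0 : f 0 = ⊥)
    (h1 : f (Fin.last n) = ⊤) (h : X →ₗ[S] Y) (hh : h ≠ 0) :
    ∃ i : Fin n, LinearMap.range h ≤ f i.succ ∧ ¬ LinearMap.range h ≤ f i.castSucc := by
  by_contra hcon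
  push Not at hcon
  have : ∀ j : Fin (n + 1), LinearMap.range h ≤ f j := by
    intro j
    induction j using Fin.reverseInduction with
    | last => rw [h1]; exact le_top
    | cast i ih => exact hcon i ih
  have := this 0
  rw [h0, le_bot_iff, LinearMap.range_eq_bot] at this
  exact hh this

theorem filt_section {A B : Submodule S Y} (h : X →ₗ[S] Y)
    (h1 : LinearMap.range h ≤ B) (h2 : ¬ LinearMap.range h ≤ A) :
    ∃ u : X →ₗ[S] (B ⧸ Submodule.comap B.subtype A), u ≠ 0 := by
  refine ⟨Submodule.mkQ _ ∘ₗ h.codRestrict B (fun x => h1 ⟨x, rfl⟩), fun h0 => h2 ?_⟩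
  rintro _ ⟨x, rfl⟩
  have := LinearMap.congr_fun h0 x
  simpa using this

theorem std_top (Q : QHData S Λ) (l : Λ) : ∃ t : Q.std l →ₗ[S] Q.L l,
    Function.Surjective t ∧ ∀ κ, cf Q κ (LinearMap.ker t) → κ < l := by
  obtain ⟨p, hp, -, -⟩ := std_cover Q l
  obtain ⟨n, f, -, h0, h1, hs, hc⟩ := Q.multOne l
  have hc' := Nat.card_eq_one_iff_unique.1 hc
  obtain ⟨⟨hsub⟩, ⟨⟨i0, ⟨e⟩⟩⟩⟩ := hc'
  have key : ∀ h : Q.P l →ₗ[S] Q.std l, h ≠ 0 → LinearMap.range h ≤ f i0.succ ∧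
      ¬ LinearMap.range h ≤ f i0.castSucc := by
    intro h hh
    obtain ⟨i, hi1, hi2⟩ := filt_index f h0 h1 h hh
    have hsec := filt_section h hi1 hi2
    obtain ⟨e'⟩ := simple_of_cf (Q := Q) (κ := l) (hs i) hsec
    have := congrArg Subtype.val (hsub ⟨i, ⟨e'⟩⟩ ⟨i0, ⟨e⟩⟩)
    simp at this
    subst this
    exact ⟨hi1, hi2⟩
  have hcf : cf Q l (Q.std l) := by
    have h2 := cf_of_iso e
    exact (h2.of_surj (Submodule.mkQ _) (Submodule.mkQ_surjective _)).of_inj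
      (f i0.succ).subtype (Submodule.injective_subtype _)
  have hp0 : p ≠ 0 := by
    rintro rfl
    have : Subsingleton (Q.std l) := by
      refine subsingleton_of_forall_eq 0 fun b => ?_
      obtain ⟨y, rfl⟩ := hp b
      rfl
    exact not_cf_sub hcf
  have htop : ∀ x, x ∈ f i0.succ := by
    intro x
    obtain ⟨y, rfl⟩ := hp x
    exact (key p hp0).1 ⟨y, rfl⟩
  let c : Q.std l →ₗ[S] f i0.succ := LinearMap.id.codRestrict (f i0.succ) htop
  have hcs : Function.Surjective c := fun y => ⟨y.1, rfl⟩
  have hker : LinearMap.ker (e.toLinearMap ∘ₗ Submodule.mkQ _ ∘ₗ c) ≤ f i0.castSucc := by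
    intro x hx
    simpa [c] using hx
  refine ⟨e.toLinearMap ∘ₗ Submodule.mkQ _ ∘ₗ c,
    e.surjective.comp ((Submodule.mkQ_surjective _).comp hcs), ?_⟩
  intro κ hκ
  refine lt_of_le_of_ne (cf_std_le (hκ.of_inj _ (Submodule.injective_subtype _))) ?_
  rintro rfl
  obtain ⟨h, hh⟩ := hκ
  have hne : (Submodule.subtype _) ∘ₗ h ≠ 0 := by
    intro h0
    apply hh
    ext x
    exact LinearMap.congr_fun h0 x
  apply (key _ hne).2
  rintro _ ⟨x, rfl⟩
  exact hker (h x).2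

theorem std_ses (Q : QHData S Λ) (l : Λ) :
    ∃ (K : Submodule S (Q.P l)) (p : Q.P l →ₗ[S] Q.std l), SES K.subtype p ∧
      ∀ (i : ℕ) (N : Type) [AddCommGroup N] [Module S N],
        (∀ κ, l < κ → EV S i (Q.std κ) N) → EV S i K N := by
  obtain ⟨n, f, g, ⟨hmono, h0, h1, hsec⟩, hge, hc⟩ := Q.projFilt l
  obtain ⟨⟨hsub⟩, ⟨⟨i0, hi0⟩⟩⟩ := Nat.card_eq_one_iff_unique.1 hc
  obtain ⟨m, rfl⟩ : ∃ m, n = m + 1 := ⟨n - 1, by have := i0.2; omega⟩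
  obtain ⟨e⟩ := hsec (Fin.last m)
  have htop : ∀ x, x ∈ f (Fin.last m).succ := by
    intro x
    rw [Fin.succ_last, h1]
    trivial
  let c : Q.P l →ₗ[S] f (Fin.last m).succ := LinearMap.id.codRestrict _ htop
  have hcs : Function.Surjective c := fun y => ⟨y.1, rfl⟩
  let p : Q.P l →ₗ[S] Q.std (g (Fin.last m)) := e.toLinearMap ∘ₗ Submodule.mkQ _ ∘ₗ c
  have hps : Function.Surjective p :=
    e.surjective.comp ((Submodule.mkQ_surjective _).comp hcs)
  have hpk : LinearMap.ker p = f (Fin.last m).castSucc := by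
    ext x
    simp [p, c]
  have hlast : g (Fin.last m) = l := by
    obtain ⟨t, ht, -⟩ := std_top Q (g (Fin.last m))
    have : cf Q l (Q.L (g (Fin.last m))) := by
      refine ⟨t ∘ₗ p, fun h => ?_⟩
      have := (Q.simpleL (g (Fin.last m))).nontrivial
      obtain ⟨x, hx⟩ := exists_ne (0 : Q.L (g (Fin.last m)))
      obtain ⟨y, rfl⟩ := (ht.comp hps) x
      exact hx (LinearMap.congr_fun h y)
    exact (cf_L.1 this).symm
  have hother : ∀ i : Fin (m + 1), i ≠ Fin.last m → l < g i := by
    intro i hi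
    refine lt_of_le_of_ne (hge i) fun h => hi ?_
    exact congrArg Subtype.val (hsub ⟨i, h.symm⟩ ⟨Fin.last m, hlast⟩)
  have hses : SES (f (Fin.last m).castSucc).subtype p :=
    ⟨Submodule.injective_subtype _, hps, by rw [hpk]; simp⟩
  have hEV : ∀ (i : ℕ) (N : Type) [AddCommGroup N] [Module S N],
        (∀ κ, l < κ → EV S i (Q.std κ) N) → EV S i (f (Fin.last m).castSucc) N := by
    intro i N _ _ hN
    have : ∀ j : Fin (m + 2), j ≠ Fin.last (m + 1) → EV S i (f j) N := by
      intro j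
      induction j using Fin.induction with
      | zero =>
        intro _
        have : Subsingleton (f 0) := by rw [h0]; infer_instance
        exact EV.of_sub1 i
      | succ j ih =>
        intro hj
        have hj' : j ≠ Fin.last m := by
          rintro rfl
          exact hj (Fin.succ_last _)
        obtain ⟨e'⟩ := hsec j
        exact (SES.subq (hmono (Fin.castSucc_le_succ j))).con2
          (ih (Fin.castSucc_lt_last j).ne) (EV.congr1 e' (hN _ (hother j hj')))
    exact this _ (Fin.castSucc_lt_last _).ne
  have final : ∃ (K : Submodule S (Q.P l)) (p : Q.P l →ₗ[S] Q.std (g (Fin.last m))),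
      SES K.subtype p ∧ ∀ (i : ℕ) (N : Type) [AddCommGroup N] [Module S N],
        (∀ κ, l < κ → EV S i (Q.std κ) N) → EV S i K N := ⟨_, p, hses, hEV⟩
  rw [hlast] at final
  exact final

theorem up_ind {p : Λ → Prop} (h : ∀ l, (∀ κ, l < κ → p κ) → p l) (l : Λ) : p l :=
  (wellFounded_gt (α := Λ)).induction l h

theorem EV.std_crit (Q : QHData S Λ) (l : Λ) : ∀ (i : ℕ),
    (∀ κ, cf Q κ X → ¬ l < κ) → EV S (i + 1) (Q.std l) X := by
  induction l using up_ind with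
  | h l ih =>
    intro i hX
    obtain ⟨K, p, hs, hK⟩ := std_ses Q l
    have := projP Q l
    refine hs.con3 (hK i X fun κ hκ => ?_) (EV.proj i)
    cases i with
    | zero => exact hom_std fun h => hX κ h hκ
    | succ i => exact ih κ hκ i fun ρ hρ h => hX ρ hρ (hκ.trans h)

theorem EV.std_bound (Q : QHData S Λ) (l : Λ) : ∀ (i : ℕ) (X : Type) [AddCommGroup X]
    [Module S X], Nat.card {κ // l < κ} < i → EV S i (Q.std l) X := by
  induction l using up_ind with
  | h l ih =>
    intro i X _ _ hi
    obtain ⟨K, p, hs, hK⟩ := std_ses Q l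
    have := projP Q l
    obtain ⟨j, rfl⟩ : ∃ j, i = j + 1 := ⟨i - 1, by omega⟩
    refine hs.con3 (hK j X fun κ hκ => ih κ hκ j X ?_) (EV.proj j)
    refine lt_of_lt_of_le ?_ (Nat.lt_succ_iff.1 hi)
    apply Set.ncard_lt_ncard (s := {x | κ < x}) (t := {x | l < x})
    · refine ⟨fun x hx => hκ.trans hx, fun h => ?_⟩
      exact lt_irrefl κ (h hκ)

theorem EV.std_bound' (Q : QHData S Λ) : ∃ b : ℕ, ∀ (l : Λ) (i : ℕ) (X : Type) [AddCommGroup X]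
    [Module S X], b < i → EV S i (Q.std l) X := by
  refine ⟨Nat.card Λ, fun l i X _ _ hi => EV.std_bound Q l i X (lt_of_le_of_lt ?_ hi)⟩
  exact Finite.card_subtype_le _

theorem costd_emb (Q : QHData S Λ) (l : Λ) : ∃ j : Q.costd l →ₗ[S] Q.I l,
    Function.Injective j ∧ (∀ κ, cf Q κ (Q.costd l) → κ ≤ l) ∧
    ∀ V : Submodule S (Q.I l), (∀ κ, cf Q κ V → κ ≤ l) → V ≤ LinearMap.range j := by
  obtain ⟨V, ⟨e⟩, h1, h2⟩ := Q.costdSpec l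
  refine ⟨V.subtype ∘ₗ e.toLinearMap, V.injective_subtype.comp e.injective, ?_, ?_⟩
  · intro κ hκ
    exact h1 κ (cf_iff.1 (hκ.congr e))
  · intro W hW
    have := h2 W fun κ hκ => hW κ (cf_iff.2 hκ)
    refine this.trans ?_
    intro x hx
    exact ⟨e.symm ⟨x, hx⟩, by simp⟩

theorem cf_costd_le {Q : QHData S Λ} {κ l : Λ} (h : cf Q κ (Q.costd l)) : κ ≤ l := by
  obtain ⟨p, _, h1, _⟩ := costd_emb Q l
  exact h1 κ h

theorem EV.costd_one (Q : QHData S Λ) {l : Λ} (h : ∀ κ, cf Q κ X → κ ≤ l) :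
    EV S 1 X (Q.costd l) := by
  obtain ⟨j, hj, h1, h2⟩ := costd_emb Q l
  refine (SES.ofInj hj).of_lift (EV.inj 0 (Q.injHull l).1) ?_
  intro u
  refine ⟨0, ?_⟩
  have hW : Submodule.comap (LinearMap.range j).mkQ (LinearMap.range u) ≤ LinearMap.range j := by
    apply h2
    intro κ hκ
    let q : Submodule.comap (LinearMap.range j).mkQ (LinearMap.range u) →ₗ[S] LinearMap.range u :=
      (LinearMap.range j).mkQ.restrict (fun x hx => hx)
    have hq : Function.Surjective q := by
      rintro ⟨y, hy⟩
      obtain ⟨x, rfl⟩ := (LinearMap.range j).mkQ_surjective y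
      exact ⟨⟨x, hy⟩, rfl⟩
    rcases cf.ses (SES.ofSurj hq) hκ with h3 | h3
    · let r : LinearMap.ker q →ₗ[S] LinearMap.range j :=
        ((Submodule.subtype _) ∘ₗ (LinearMap.ker q).subtype).codRestrict (LinearMap.range j) (by
          rintro ⟨x, hx⟩
          have : q x = 0 := hx
          have := congrArg Subtype.val this
          simpa [q] using this)
      have hr : Function.Injective r := by
        intro x y hxy
        have := congrArg Subtype.val hxy
        exact Subtype.ext (Subtype.ext this)
      exact h1 κ ((h3.of_inj r hr).congr (LinearEquiv.ofInjective j hj).symm)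
    · exact h κ (h3.of_surj u.rangeRestrict u.surjective_rangeRestrict)
  ext x
  obtain ⟨y, hy⟩ := (LinearMap.range j).mkQ_surjective (u x)
  have : y ∈ LinearMap.range j := hW (by
    rw [Submodule.mem_comap, hy]; exact ⟨x, rfl⟩)
  rw [← hy, (Submodule.Quotient.mk_eq_zero _).2 this |> (fun h => (h : (LinearMap.range j).mkQ y = 0))]
  simp

theorem EV.std_costd (Q : QHData S Λ) (l ν : Λ) : ∀ i : ℕ,
    EV S (i + 1) (Q.std l) (Q.costd ν) := by
  induction l using up_ind with
  | h l ih =>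
    intro i
    cases i with
    | zero =>
      by_cases hl : l ≤ ν
      · exact EV.costd_one Q fun κ hκ => (cf_std_le hκ).trans hl
      · exact EV.std_crit Q l 0 fun κ hκ h => hl (h.le.trans (cf_costd_le hκ))
    | succ i =>
      obtain ⟨K, p, hs, hK⟩ := std_ses Q l
      have := projP Q l
      exact hs.con3 (hK _ _ fun κ hκ => ih κ hκ i) (EV.proj _)

theorem costd_soc (Q : QHData S Λ) (l : Λ) : ∃ ι : Q.L l →ₗ[S] Q.costd l,
    Function.Injective ι ∧
    ∀ N : Submodule S (Q.costd l), N ⊓ LinearMap.range ι = ⊥ → N = ⊥ := by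
  obtain ⟨j, hj, h1, h2⟩ := costd_emb Q l
  obtain ⟨-, ι, hι, hess⟩ := Q.injHull l
  have hr : LinearMap.range ι ≤ LinearMap.range j := h2 _ fun κ hκ =>
    (cf_L.1 (hκ.congr (LinearEquiv.ofInjective ι hι).symm)).le
  obtain ⟨v, hv⟩ := (SES.ofInj hj).factor ι (by
    ext x
    simpa using hr ⟨x, rfl⟩)
  refine ⟨v, ?_, ?_⟩
  · apply Function.Injective.of_comp (f := j)
    rw [← LinearMap.coe_comp, hv]
    exact hι
  · intro N hN
    have : N.map j ⊓ LinearMap.range ι = ⊥ := by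
      rw [← hv, LinearMap.range_comp, ← Submodule.map_inf j hj, hN, Submodule.map_bot]
    have := hess _ this
    exact Submodule.map_injective_of_injective hj (this.trans (Submodule.map_bot j).symm)

end stds
end QHProof

namespace QHProof
open CategoryTheory QHPaper
set_option linter.unusedSectionVars false
section duals
variable {S : Type} [Ring S] [IsArtinianRing S] {Λ : Type} [Fintype Λ] [PartialOrder Λ]
variable {A B C X Y : Type} [AddCommGroup A] [AddCommGroup B] [AddCommGroup C]
    [Module S A] [Module S B] [Module S C] [AddCommGroup X] [AddCommGroup Y]
    [Module S X] [Module S Y]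
  [Module.Finite S A] [Module.Finite S B] [Module.Finite S C] [Module.Finite S X]
  [Module.Finite S Y]
variable {Q : QHData S Λ} (d : Duality S Q)

/-- the dual of an unbundled module -/
abbrev Du (d : Duality S Q) (X : Type) [AddCommGroup X] [Module S X] : Type :=
  ↥(d.D (ModuleCat.of S X))

/-- the dual of a map -/
def dm (f : X →ₗ[S] Y) : Du d Y →ₗ[S] Du d X :=
  d.Dmap (A := ModuleCat.of S X) (B := ModuleCat.of S Y) f

instance finDu : Module.Finite S (Du d X) := d.finD (ModuleCat.of S X) ‹_›

instance finLi (κ : Λ) : Module.Finite S (Q.L κ) := Q.finiteL κ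

theorem dm_id : dm d (LinearMap.id : X →ₗ[S] X) = LinearMap.id := d.Did (ModuleCat.of S X) ‹_›

theorem dm_comp (f : A →ₗ[S] B) (g : B →ₗ[S] C) : dm d (g ∘ₗ f) = dm d f ∘ₗ dm d g :=
  d.Dcomp (A := ModuleCat.of S A) (B := ModuleCat.of S B) (C := ModuleCat.of S C)
    ‹_› ‹_› ‹_› f g

theorem dm_zero : dm d (0 : X →ₗ[S] Y) = 0 := by
  have h := d.Dadd (A := ModuleCat.of S X) (B := ModuleCat.of S Y) ‹_› ‹_› 0 0
  rw [add_zero] at h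
  exact left_eq_add.1 h

theorem dm_full (g : Du d Y →ₗ[S] Du d X) : ∃ f : X →ₗ[S] Y, dm d f = g :=
  (d.Dfull (A := ModuleCat.of S X) (B := ModuleCat.of S Y) ‹_› ‹_›).2 g

theorem dm_inj {f g : X →ₗ[S] Y} (h : dm d f = dm d g) : f = g :=
  (d.Dfull (A := ModuleCat.of S X) (B := ModuleCat.of S Y) ‹_› ‹_›).1 h

theorem SES.dual {f : A →ₗ[S] B} {g : B →ₗ[S] C} (h : SES f g) : SES (dm d g) (dm d f) := by
  obtain ⟨h1, h2, h3⟩ := d.Dexact (A := ModuleCat.of S A) (B := ModuleCat.of S B)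
    (C := ModuleCat.of S C) ‹_› ‹_› ‹_› f g h.inj h.surj h.ex
  exact ⟨h1, h2, h3⟩

theorem dm_equiv (e : X ≃ₗ[S] Y) : Nonempty (Du d Y ≃ₗ[S] Du d X) :=
  ⟨LinearEquiv.ofLinearMap (dm d e.toLinearMap) (dm d e.symm.toLinearMap)
    (by rw [← dm_comp]; simp [dm_id]) (by rw [← dm_comp]; simp [dm_id])⟩

theorem du_invol (X : Type) [AddCommGroup X] [Module S X] [Module.Finite S X] :
    Nonempty (Du d (Du d X) ≃ₗ[S] X) := d.Dinvol (ModuleCat.of S X) ‹_›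

theorem du_L (κ : Λ) : Nonempty (Du d (Q.L κ) ≃ₗ[S] Q.L κ) := d.DL κ

theorem dm_surj {f : X →ₗ[S] Y} (h : Function.Injective f) : Function.Surjective (dm d f) :=
  ((SES.ofInj h).dual d).surj

theorem dm_injective {f : X →ₗ[S] Y} (h : Function.Surjective f) : Function.Injective (dm d f) :=
  ((SES.ofSurj h).dual d).inj

theorem surj_of_dm {f : X →ₗ[S] Y} (h : Function.Injective (dm d f)) : Function.Surjective f := by
  have h1 : (LinearMap.range f).mkQ ∘ₗ f = 0 := by
    ext x
    simp
  have h2 : dm d (LinearMap.range f).mkQ = 0 := by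
    have h3 : dm d f ∘ₗ dm d (LinearMap.range f).mkQ = 0 := by
      rw [← dm_comp, h1, dm_zero]
    ext x
    apply h
    simpa using LinearMap.congr_fun h3 x
  have h4 : (LinearMap.range f).mkQ = 0 := dm_inj d (h2.trans (dm_zero d).symm)
  rw [← LinearMap.range_eq_top, ← Submodule.ker_mkQ (LinearMap.range f), h4, LinearMap.ker_zero]

theorem duProj_inj [Module.Projective S X] : Module.Injective S (Du d X) := by
  apply Module.Baer.injective
  intro I φ
  obtain ⟨ψI⟩ := du_invol d I
  obtain ⟨ψS⟩ := du_invol d S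
  obtain ⟨b, hb⟩ := dm_full d (ψS.symm.toLinearMap ∘ₗ (Submodule.subtype I) ∘ₗ ψI.toLinearMap)
  have hbs : Function.Surjective b := by
    apply surj_of_dm d
    rw [hb]
    exact ψS.symm.injective.comp ((Submodule.injective_subtype I).comp ψI.injective)
  obtain ⟨h, hh⟩ := dm_full d (φ ∘ₗ ψI.toLinearMap)
  obtain ⟨h', hh'⟩ := Module.projective_lifting_property b h hbs
  refine ⟨dm d h' ∘ₗ ψS.symm.toLinearMap, fun x hx => ?_⟩
  have e1 : dm d h' ∘ₗ dm d b = φ ∘ₗ ψI.toLinearMap := by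
    rw [← dm_comp, hh', hh]
  have e2 := LinearMap.congr_fun e1 (ψI.symm ⟨x, hx⟩)
  rw [hb] at e2
  simpa using e2

theorem exists_inj (d : Duality S Q) (X : Type) [AddCommGroup X] [Module S X] [Module.Finite S X] :
    ∃ (J : ModuleCat.{0} S), Module.Finite S J ∧ Module.Injective S J ∧
      ∃ f : X →ₗ[S] J, Function.Injective f := by
  obtain ⟨n, f, hf⟩ := Module.Finite.exists_fin' S (Du d X)
  obtain ⟨e⟩ := du_invol d X
  refine ⟨d.D (ModuleCat.of S (Fin n → S)), finDu d, duProj_inj d,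
    dm d f ∘ₗ e.symm.toLinearMap, ?_⟩
  exact (dm_injective d hf).comp e.symm.injective

theorem finI (d : Duality S Q) (ν : Λ) : Module.Finite S (Q.I ν) := by
  obtain ⟨J, hJ1, hJ2, f, hf⟩ := exists_inj d (Q.L ν)
  obtain ⟨-, ι, hι, hess⟩ := Q.injHull ν
  obtain ⟨h, hh⟩ := hJ2.out ι hι f
  refine Module.Finite.of_injective h ?_
  rw [← LinearMap.ker_eq_bot]
  apply hess
  rw [eq_bot_iff]
  rintro _ ⟨hx, ⟨y, rfl⟩⟩
  have : f y = 0 := by rw [← hh]; exact hx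
  have : y = 0 := hf (by simpa using this)
  simp [this]

theorem finCostd (d : Duality S Q) (ν : Λ) : Module.Finite S (Q.costd ν) := by
  obtain ⟨j, hj, -⟩ := costd_emb Q ν
  have := finI d ν
  exact Module.Finite.of_injective j hj

theorem EV.dual : ∀ (i : ℕ) {A B : Type} [AddCommGroup A] [AddCommGroup B] [Module S A]
    [Module S B] [Module.Finite S A] [Module.Finite S B],
    EV S i A B → EV S i (Du d B) (Du d A)
  | 0, A, B, _, _, _, _, _, _, h => by
    rw [EV.zero_iff] at *
    intro g
    obtain ⟨f, rfl⟩ := dm_full d g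
    rw [h f, dm_zero]
  | 1, A, B, _, _, _, _, _, _, h => by
    obtain ⟨n, f, hf⟩ := Module.Finite.exists_fin' S A
    refine ((SES.ofSurj hf).dual d).of_lift (EV.inj 0 (duProj_inj d)) ?_
    intro u
    obtain ⟨g, rfl⟩ := dm_full d u
    obtain ⟨v, hv⟩ := (SES.ofSurj hf).extend h g
    exact ⟨dm d v, by rw [← dm_comp, hv]⟩
  | i + 2, A, B, _, _, _, _, _, _, h => by
    obtain ⟨n, f, hf⟩ := Module.Finite.exists_fin' S A
    have h1 : EV S (i + 1) (LinearMap.ker f) B := (SES.ofSurj hf).con1 (EV.proj i) h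
    exact ((SES.ofSurj hf).dual d).cov1 (EV.dual (i + 1) h1) (EV.inj _ (duProj_inj d))

theorem cf.dual {κ : Λ} (h : cf Q κ X) : cf Q κ (Du d X) := by
  obtain ⟨f, hf⟩ := h
  obtain ⟨hp, π, hs, hsup⟩ := Q.projCover κ
  have := finP Q κ
  have hk : LinearMap.ker f ≤ LinearMap.ker π :=
    cover_ker_le hs hsup _ (fun h => hf (LinearMap.ker_eq_top.1 h))
  obtain ⟨v, hv⟩ := (SES.ofSurj f.surjective_rangeRestrict).cofactor π (by
    ext x
    have : (x : Q.P κ) ∈ LinearMap.ker f := by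
      exact congrArg Subtype.val (LinearMap.mem_ker.1 x.2)
    exact hk this)
  have hvs : Function.Surjective v := by
    apply Function.Surjective.of_comp (g := f.rangeRestrict)
    rw [← LinearMap.coe_comp, hv]
    exact hs
  obtain ⟨e⟩ := du_L d κ
  exact ((cf_of_iso e).of_inj _ (dm_injective d hvs)).of_surj _
    (dm_surj d (LinearMap.range f).injective_subtype)

theorem cf.of_dual {κ : Λ} (h : cf Q κ (Du d X)) : cf Q κ X := by
  obtain ⟨e⟩ := du_invol d X
  exact (h.dual d).congr e

/-- maps from a module with simple top -/
theorem std_du_costd1 (ν : Λ) : ∃ v : Q.std ν →ₗ[S] Du d (Q.costd ν), Function.Surjective v := by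
  have := finCostd d ν
  obtain ⟨ι, hι, hess⟩ := costd_soc Q ν
  obtain ⟨p, hp, -, huniv⟩ := std_cover Q ν
  obtain ⟨hP, π, hs, hsup⟩ := Q.projCover ν
  obtain ⟨e⟩ := du_L d ν
  obtain ⟨q, hq⟩ := Module.projective_lifting_property (e.toLinearMap ∘ₗ dm d ι) π
    (e.surjective.comp (dm_surj d hι))
  have hqs : Function.Surjective q := by
    by_contra hns
    rw [← LinearMap.range_eq_top] at hns
    have : Nontrivial (Du d (Q.costd ν) ⧸ LinearMap.range q) :=
      Submodule.Quotient.nontrivial_iff.2 hns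
    obtain ⟨κ, t, ht⟩ := exists_simple_quot (S := S) Q (X := Du d (Q.costd ν) ⧸ LinearMap.range q)
    obtain ⟨e'⟩ := du_L d κ
    obtain ⟨h, hh⟩ := dm_full d (e'.symm.toLinearMap ∘ₗ t ∘ₗ (LinearMap.range q).mkQ)
    have hsurj : Function.Surjective (dm d h) := by
      rw [hh]
      exact e'.symm.surjective.comp (ht.comp (Submodule.mkQ_surjective _))
    have hh0 : h ≠ 0 := by
      rintro rfl
      rw [dm_zero] at hsurj
      have h1 : Subsingleton (Du d (Q.L κ)) := by
        refine subsingleton_of_forall_eq 0 fun b => ?_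
        obtain ⟨y, rfl⟩ := hsurj b
        rfl
      have := (Q.simpleL κ).nontrivial
      exact not_subsingleton (Q.L κ) (e'.symm.injective.subsingleton)
    have hhi := L_inj_or_zero h hh0
    have hsk := Q.simpleL κ
    have hsn := Q.simpleL ν
    have at1 : IsAtom (LinearMap.range h) := isSimpleModule_iff_isAtom.1
      (IsSimpleModule.congr (LinearEquiv.ofInjective h hhi).symm)
    have at2 : IsAtom (LinearMap.range ι) := isSimpleModule_iff_isAtom.1
      (IsSimpleModule.congr (LinearEquiv.ofInjective ι hι).symm)
    have heq : LinearMap.range h = LinearMap.range ι := by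
      by_contra hne
      exact at1.1 (hess _ (IsAtom.disjoint_of_ne at1 at2 hne).eq_bot)
    obtain ⟨α, hα⟩ := (SES.ofInj hhi).factor ι (by
      ext x
      simp only [LinearMap.comp_apply, Submodule.mkQ_apply, LinearMap.zero_apply,
        Submodule.Quotient.mk_eq_zero, heq]
      exact ⟨x, rfl⟩)
    have h5 : dm d ι ∘ₗ q = 0 := by
      rw [← hα, dm_comp, hh]
      ext x
      have hqx : (LinearMap.range q).mkQ (q x) = 0 :=
        (Submodule.Quotient.mk_eq_zero _).2 ⟨x, rfl⟩
      simp only [LinearMap.comp_apply, hqx, map_zero, LinearMap.zero_apply]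
    have h6 : π = 0 := by
      rw [← hq, LinearMap.comp_assoc, h5]
      simp
    rw [h6] at hs
    have := hsn.nontrivial
    obtain ⟨x, hx⟩ := exists_ne (0 : Q.L ν)
    obtain ⟨y, rfl⟩ := hs x
    exact hx rfl
  obtain ⟨v, hv⟩ := huniv _ q hqs fun κ hκ => cf_costd_le (hκ.of_dual d)
  refine ⟨v, ?_⟩
  apply Function.Surjective.of_comp (g := p)
  rw [← LinearMap.coe_comp, hv]
  exact hqs

theorem ker_le_of_P {ν : Λ} {Z : Type} [AddCommGroup Z] [Module S Z] (hZ : IsSimpleModule S Z)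
    (f : Q.P ν →ₗ[S] Z) (hf : f ≠ 0) (g : Q.P ν →ₗ[S] Y) (hg : g ≠ 0) :
    LinearMap.ker g ≤ LinearMap.ker f := by
  obtain ⟨hP, π, hs, hsup⟩ := Q.projCover ν
  have h1 := cover_ker_le hs hsup _ (fun h => hg (LinearMap.ker_eq_top.1 h))
  have hfs : Function.Surjective f := (LinearMap.surjective_or_eq_zero f).resolve_right hf
  have hco : IsCoatom (LinearMap.ker f) := LinearMap.isCoatom_ker_of_surjective hfs
  have h2 := cover_ker_le hs hsup _ hco.1
  have heq : LinearMap.ker f = LinearMap.ker π :=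
    ((hco.le_iff.1 h2).resolve_left (cover_coatom Q hs).1).symm
  rw [heq]
  exact h1

theorem comp_ne_zero_of_surj {p : X →ₗ[S] Y} (hp : Function.Surjective p) {g : Y →ₗ[S] A}
    (hg : g ≠ 0) : g ∘ₗ p ≠ 0 := by
  intro h
  apply hg
  ext y
  obtain ⟨x, rfl⟩ := hp y
  exact LinearMap.congr_fun h x

theorem ne_zero_of_surj_simple {κ : Λ} {t : X →ₗ[S] Q.L κ} (ht : Function.Surjective t) :
    t ≠ 0 := by
  rintro rfl
  have := (Q.simpleL κ).nontrivial
  obtain ⟨x, hx⟩ := exists_ne (0 : Q.L κ)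
  obtain ⟨y, rfl⟩ := ht x
  exact hx rfl

theorem std_du_costd2 (ν : Λ) : ∃ v : Du d (Q.std ν) →ₗ[S] Q.costd ν, Function.Injective v := by
  have := finCostd d ν
  have := finStd Q ν
  have := finP Q ν
  obtain ⟨p, hp, -, -⟩ := std_cover Q ν
  obtain ⟨t, ht, -⟩ := std_top Q ν
  obtain ⟨j, hj, -, hj2⟩ := costd_emb Q ν
  obtain ⟨hI, ι, hι, -⟩ := Q.injHull ν
  obtain ⟨e⟩ := du_L d ν
  have ht0 : t ≠ 0 := ne_zero_of_surj_simple ht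
  obtain ⟨w, hw⟩ := hI.out (dm d t ∘ₗ e.symm.toLinearMap)
    ((dm_injective d ht).comp e.symm.injective) ι
  have hwi : Function.Injective w := by
    rw [← LinearMap.ker_eq_bot]
    by_contra hne
    have : Nontrivial (LinearMap.ker w) := Submodule.nontrivial_iff_ne_bot.2 hne
    obtain ⟨κ, a, ha⟩ := exists_simple_sub (S := S) Q (X := LinearMap.ker w)
    obtain ⟨e'⟩ := du_L d κ
    obtain ⟨h, hh⟩ := dm_full d ((LinearMap.ker w).subtype ∘ₗ a ∘ₗ e'.toLinearMap)
    have hh0 : h ≠ 0 := by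
      rintro rfl
      rw [dm_zero] at hh
      have hinj : Function.Injective ((LinearMap.ker w).subtype ∘ₗ a ∘ₗ e'.toLinearMap) :=
        (Submodule.injective_subtype _).comp (ha.comp e'.injective)
      rw [← hh] at hinj
      have h1 : Subsingleton (Du d (Q.L κ)) := ⟨fun x y => hinj rfl⟩
      have := (Q.simpleL κ).nontrivial
      exact not_subsingleton (Q.L κ) (e'.symm.injective.subsingleton)
    have hhs : Function.Surjective h := by
      have := Q.simpleL κ
      exact (LinearMap.surjective_or_eq_zero h).resolve_right hh0
    have hker := ker_le_of_P (Q.simpleL ν) (t ∘ₗ p) (comp_ne_zero_of_surj hp ht0) (h ∘ₗ p)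
      (comp_ne_zero_of_surj hp hh0)
    obtain ⟨α, hα⟩ := (SES.ofSurj hhs).cofactor t (by
      ext x
      obtain ⟨y, hy⟩ := hp x
      have : y ∈ LinearMap.ker (h ∘ₗ p) := by
        simp [hy]
      have := hker this
      simpa [hy] using this)
    have h0 : ι = 0 := by
      ext x
      rw [← hw, ← hα, dm_comp, hh]
      simp
    rw [h0] at hι
    have := (Q.simpleL ν).nontrivial
    obtain ⟨x, hx⟩ := exists_ne (0 : Q.L ν)
    exact hx (hι rfl)
  have hle : LinearMap.range w ≤ LinearMap.range j := hj2 _ fun κ hκ =>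
    cf_std_le ((hκ.congr (LinearEquiv.ofInjective w hwi).symm).of_dual d)
  obtain ⟨v, hv⟩ := (SES.ofInj hj).factor w (by
    ext x
    simpa using hle ⟨x, rfl⟩)
  refine ⟨v, ?_⟩
  apply Function.Injective.of_comp (f := j)
  rw [← LinearMap.coe_comp, hv]
  exact hwi

theorem std_equiv (ν : Λ) : Nonempty (Q.std ν ≃ₗ[S] Du d (Q.costd ν)) := by
  have := finCostd d ν
  have := finStd Q ν
  obtain ⟨v, hv⟩ := std_du_costd1 d ν
  obtain ⟨w, hw⟩ := std_du_costd2 d ν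
  obtain ⟨e⟩ := du_invol d (Q.std ν)
  have hs : Function.Surjective (e.toLinearMap ∘ₗ dm d w ∘ₗ v) :=
    e.surjective.comp ((dm_surj d hw).comp hv)
  have hi := IsNoetherian.injective_of_surjective_endomorphism _ hs
  have hvi : Function.Injective v :=
    Function.Injective.of_comp (f := (e.toLinearMap ∘ₗ dm d w)) hi
  exact ⟨LinearEquiv.ofBijective v ⟨hvi, hv⟩⟩

theorem costd_equiv (ν : Λ) : Nonempty (Du d (Q.std ν) ≃ₗ[S] Q.costd ν) := by
  have := finCostd d ν
  have := finStd Q ν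
  obtain ⟨e⟩ := std_equiv d ν
  obtain ⟨e1⟩ := dm_equiv d e
  obtain ⟨e2⟩ := du_invol d (Q.costd ν)
  exact ⟨e1.symm ≪≫ₗ e2⟩

theorem EV.to_costd {i : ℕ} {ν : Λ} (h : EV S i (Q.std ν) (Du d X)) : EV S i X (Q.costd ν) := by
  have := finStd Q ν
  obtain ⟨e⟩ := costd_equiv d ν
  obtain ⟨e2⟩ := du_invol d X
  exact EV.congr1 e2.symm (EV.congr2 e.symm (EV.dual d i h))

theorem EV.of_costd {i : ℕ} {ν : Λ} (h : EV S i X (Q.costd ν)) : EV S i (Q.std ν) (Du d X) := by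
  have := finCostd d ν
  obtain ⟨e⟩ := std_equiv d ν
  exact EV.congr1 e (EV.dual d i h)

theorem cf.quot {κ : Λ} {f : A →ₗ[S] B} {g : B →ₗ[S] C} (h : SES f g)
    (hc : cf Q κ (B ⧸ LinearMap.range f)) : cf Q κ C := by
  have e := (Submodule.quotEquivOfEq _ _ h.ex) ≪≫ₗ g.quotKerEquivOfSurjective h.surj
  exact hc.congr e

theorem range_L_eq {κ ν : Λ} {h : Q.L κ →ₗ[S] X} (hh : Function.Injective h) {ι : Q.L ν →ₗ[S] X}
    (hι : Function.Injective ι)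
    (hess : ∀ N : Submodule S X, N ⊓ LinearMap.range ι = ⊥ → N = ⊥) :
    LinearMap.range h = LinearMap.range ι := by
  have hsk := Q.simpleL κ
  have hsn := Q.simpleL ν
  have at1 : IsAtom (LinearMap.range h) := isSimpleModule_iff_isAtom.1
    (IsSimpleModule.congr (LinearEquiv.ofInjective h hh).symm)
  have at2 : IsAtom (LinearMap.range ι) := isSimpleModule_iff_isAtom.1
    (IsSimpleModule.congr (LinearEquiv.ofInjective ι hι).symm)
  by_contra hne
  exact at1.1 (hess _ (IsAtom.disjoint_of_ne at1 at2 hne).eq_bot)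

theorem costd_ses (d : Duality S Q) (ν : Λ) : ∃ ι : Q.L ν →ₗ[S] Q.costd ν, Function.Injective ι ∧
    (∀ N : Submodule S (Q.costd ν), N ⊓ LinearMap.range ι = ⊥ → N = ⊥) ∧
    ∀ κ, cf Q κ (Q.costd ν ⧸ LinearMap.range ι) → κ < ν := by
  have := finCostd d ν
  have := finStd Q ν
  obtain ⟨t, ht, hκ⟩ := std_top Q ν
  obtain ⟨e1⟩ := costd_equiv d ν
  obtain ⟨e2⟩ := du_L d ν
  have hs := (SES.ofSurj ht).dual d
  have hs' : SES (e1.toLinearMap ∘ₗ dm d t ∘ₗ e2.symm.toLinearMap)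
      (dm d (LinearMap.ker t).subtype ∘ₗ e1.symm.toLinearMap) := by
    refine ⟨e1.injective.comp (hs.inj.comp e2.symm.injective),
      hs.surj.comp e1.symm.surjective, ?_⟩
    ext x
    constructor
    · rintro ⟨y, rfl⟩
      have := LinearMap.congr_fun hs.comp_zero (e2.symm y)
      simpa using this
    · intro hx
      have : e1.symm x ∈ LinearMap.ker (dm d (LinearMap.ker t).subtype) := hx
      rw [← hs.ex] at this
      obtain ⟨y, hy⟩ := this
      exact ⟨e2 y, by simp [hy]⟩
  refine ⟨_, hs'.inj, ?_, fun κ h => hκ κ ((cf.quot hs' h).of_dual d)⟩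
  obtain ⟨ι', hι', hess⟩ := costd_soc Q ν
  intro N hN
  rw [range_L_eq hs'.inj hι' hess] at hN
  exact hess N hN

end duals
end QHProof

namespace QHProof
open CategoryTheory QHPaper
section good
variable {S : Type} [Ring S] [IsArtinianRing S] {Λ : Type} [Fintype Λ] [PartialOrder Λ]
variable {A B C X Y : Type} [AddCommGroup A] [AddCommGroup B] [AddCommGroup C]
    [Module S A] [Module S B] [Module S C] [AddCommGroup X] [AddCommGroup Y]
    [Module S X] [Module S Y]
  [Module.Finite S A] [Module.Finite S B] [Module.Finite S C] [Module.Finite S X]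
  [Module.Finite S Y]
variable {Q : QHData S Λ}

theorem EV.zero_surj {X Y Z : Type} [AddCommGroup X] [AddCommGroup Y] [AddCommGroup Z]
    [Module S X] [Module S Y] [Module S Z] {p : X →ₗ[S] Y} (hp : Function.Surjective p)
    (h : EV S 0 X Z) : EV S 0 Y Z := by
  rw [EV.zero_iff] at *
  intro g
  ext y
  obtain ⟨x, rfl⟩ := hp y
  exact LinearMap.congr_fun (h (g ∘ₗ p)) x

theorem EV.zero_inj {X Y Z : Type} [AddCommGroup X] [AddCommGroup Y] [AddCommGroup Z]
    [Module S X] [Module S Y] [Module S Z] {p : X →ₗ[S] Y} (hp : Function.Injective p)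
    (h : EV S 0 Z Y) : EV S 0 Z X := by
  rw [EV.zero_iff] at *
  intro g
  ext y
  apply hp
  simpa using LinearMap.congr_fun (h (p ∘ₗ g)) y

/-- a module with no homs from `Δ κ`, `κ < ν`, but a hom from `Δ ν`, contains `L ν`. -/
theorem hom_L_of_std {ν : Λ} (h1 : ∀ κ, κ < ν → EV S 0 (Q.std κ) X) (h2 : ¬ EV S 0 (Q.std ν) X) :
    ∃ a : Q.L ν →ₗ[S] X, Function.Injective a := by
  have hL : ∀ κ, κ < ν → EV S 0 (Q.L κ) X := by
    intro κ hκ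
    obtain ⟨t, ht, -⟩ := std_top Q κ
    exact EV.zero_surj ht (h1 κ hκ)
  rw [EV.zero_iff] at h2
  push Not at h2
  obtain ⟨u, hu⟩ := h2
  have := finStd Q ν
  obtain ⟨t, ht, hκ⟩ := std_top Q ν
  have h3 : EV S 0 (LinearMap.ker t) X := EV.dev1 Q fun κ hk => hL κ (hκ κ hk)
  rw [EV.zero_iff] at h3
  obtain ⟨a, ha⟩ := (SES.ofSurj ht).cofactor u (h3 _)
  refine ⟨a, L_inj_or_zero a ?_⟩
  rintro rfl
  exact hu (by rw [← ha]; simp)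

theorem exists_hom_std [Nontrivial X] : ∃ ν, ¬ EV S 0 (Q.std ν) X := by
  obtain ⟨κ, f, hf⟩ := exists_simple_sub (S := S) Q (X := X)
  obtain ⟨t, ht, -⟩ := std_top Q κ
  refine ⟨κ, fun h => ?_⟩
  rw [EV.zero_iff] at h
  have h1 := h (f ∘ₗ t)
  have := (Q.simpleL κ).nontrivial
  obtain ⟨x, hx⟩ := exists_ne (0 : Q.L κ)
  obtain ⟨y, rfl⟩ := ht x
  exact hx (hf (by simpa using LinearMap.congr_fun h1 y))

theorem good_dev (d : Duality S Q) (good : Λ → Prop)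
    (p : ∀ (X : Type) [AddCommGroup X] [Module S X], Prop)
    (hsub : ∀ (X : Type) [AddCommGroup X] [Module S X], Subsingleton X → p X)
    (hstep : ∀ (B : Type) [AddCommGroup B] [Module S B] (N : Submodule S B) (ν : Λ),
      Nonempty (N ≃ₗ[S] Q.costd ν) → good ν → p (B ⧸ N) → p B) (n : ℕ∞) :
    ∀ (X : Type) [AddCommGroup X] [Module S X] [Module.Finite S X], Module.length S X = n →
    (∀ ν, EV S 1 (Q.std ν) X) → (∀ ν, ¬ EV S 0 (Q.std ν) X → good ν) → p X := by
  induction n using WellFoundedLT.induction with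
  | ind n ih =>
    intro X _ _ _ hn h1 hg
    rcases subsingleton_or_nontrivial X with hX | hX
    · exact hsub X hX
    · obtain ⟨ν, hν⟩ := (Set.toFinite {ν | ¬ EV S 0 (Q.std ν) X}).exists_minimal
        (exists_hom_std (Q := Q) (X := X))
      have hmin : ∀ κ, κ < ν → EV S 0 (Q.std κ) X := by
        intro κ hκ
        by_contra h
        exact (hν.not_prop_of_lt hκ) h
      obtain ⟨a, ha⟩ := hom_L_of_std hmin hν.prop
      obtain ⟨ι, hι, hess, hcf⟩ := costd_ses d ν
      have := finCostd d ν
      have hL : ∀ κ, κ < ν → EV S 0 (Q.L κ) X := by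
        intro κ hκ
        obtain ⟨t, ht, -⟩ := std_top Q κ
        exact EV.zero_surj ht (hmin κ hκ)
      have hL1 : ∀ κ, κ < ν → EV S 1 (Q.L κ) X := by
        intro κ hκ
        obtain ⟨t, ht, htk⟩ := std_top Q κ
        have := finStd Q κ
        exact (SES.ofSurj ht).con3
          (EV.dev1 Q fun ρ hρ => hL ρ ((htk ρ hρ).trans hκ)) (h1 κ)
      obtain ⟨b, hb⟩ := (SES.ofInj hι).extend (N := X) (EV.dev1 Q fun κ hκ => hL1 κ (hcf κ hκ)) a
      have hbi : Function.Injective b := by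
        rw [← LinearMap.ker_eq_bot]
        apply hess
        rw [eq_bot_iff]
        rintro _ ⟨hx, ⟨y, rfl⟩⟩
        have : a y = 0 := by rw [← hb]; exact hx
        have : y = 0 := ha (by simpa using this)
        simp [this]
      have e := (LinearEquiv.ofInjective b hbi)
      have hEV : ∀ κ i, EV S (i + 1) (Q.std κ) (LinearMap.range b) := fun κ i =>
        EV.congr2 e.symm (EV.std_costd Q κ ν i)
      have hne : LinearMap.range b ≠ ⊥ := by
        intro h0
        rw [LinearMap.range_eq_bot] at h0
        have := (Q.simpleL ν).nontrivial
        obtain ⟨x, hx⟩ := exists_ne (0 : Q.L ν)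
        apply hx
        apply ha
        rw [← hb, h0]; simp
      apply hstep X (LinearMap.range b) ν ⟨e.symm⟩ (hg ν hν.prop)
      refine ih _ ?_ _ rfl ?_ ?_
      · rw [← hn]
        exact Submodule.length_quotient_lt _ hne
      · intro κ
        exact (SES.sub (LinearMap.range b)).cov3 (h1 κ) (hEV κ 1)
      · intro κ hκ
        apply hg
        intro h0
        exact hκ ((SES.sub (LinearMap.range b)).cov3 h0 (hEV κ 0))

/-- EV into a module with good filtration -/
theorem EV.good (d : Duality S Q) {M : Type} [AddCommGroup M] [Module S M] {n : ℕ}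
    (h1 : ∀ ν, EV S 1 (Q.std ν) X)
    (hM : ∀ ν, ¬ EV S 0 (Q.std ν) X → EV S n M (Q.costd ν)) : EV S n M X :=
  good_dev d (fun ν => EV S n M (Q.costd ν)) (fun X _ _ => EV S n M X)
    (fun _ _ _ _ => EV.of_sub2 n)
    (fun _ _ _ N _ ⟨e⟩ h1 h2 => (SES.sub N).cov2 (EV.congr2 e h1) h2) _ X rfl h1 hM

theorem subquot_congr {M : ModuleCat.{0} S} {A A' B B' : Submodule S M} (hA : A = A') (hB : B = B')
    {D : Type} [AddCommGroup D] [Module S D] (h : Nonempty (subquot S A B ≃ₗ[S] D)) :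
    Nonempty (subquot S A' B' ≃ₗ[S] D) := by
  subst hA hB
  exact h

theorem subquot_comap {X : Type} [AddCommGroup X] [Module S X] (N : Submodule S X)
    (A B : Submodule S (X ⧸ N)) :
    Nonempty ((B.comap N.mkQ ⧸ Submodule.comap (B.comap N.mkQ).subtype (A.comap N.mkQ)) ≃ₗ[S]
      (B ⧸ Submodule.comap B.subtype A)) := by
  let q : B.comap N.mkQ →ₗ[S] B := N.mkQ.restrict (fun x hx => hx)
  have hq : Function.Surjective q := by
    rintro ⟨y, hy⟩
    obtain ⟨x, rfl⟩ := N.mkQ_surjective y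
    exact ⟨⟨x, hy⟩, rfl⟩
  let r := (Submodule.comap B.subtype A).mkQ ∘ₗ q
  have hr : Function.Surjective r := (Submodule.mkQ_surjective _).comp hq
  have hk : LinearMap.ker r = Submodule.comap (B.comap N.mkQ).subtype (A.comap N.mkQ) := by
    ext x
    simp [r, q]
  exact ⟨Submodule.quotEquivOfEq _ _ hk.symm ≪≫ₗ r.quotKerEquivOfSurjective hr⟩

theorem costdFilt_step {X : Type} [AddCommGroup X] [Module S X] (N : Submodule S X) (ν : Λ)
    (e : N ≃ₗ[S] Q.costd ν) (h : InCostdFilt S Q (ModuleCat.of S (X ⧸ N))) :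
    InCostdFilt S Q (ModuleCat.of S X) := by
  obtain ⟨n, f, g, hmono, h0, h1, hs⟩ := h
  refine ⟨n + 1, Fin.cons ⊥ (fun j => (f j).comap N.mkQ), Fin.cons ν g, ?_, rfl, ?_, ?_⟩
  · intro i j hij
    induction i using Fin.cases with
    | zero => simp
    | succ i =>
      induction j using Fin.cases with
      | zero => exact absurd hij (by simp)
      | succ j =>
        simp only [Fin.cons_succ]
        exact Submodule.comap_mono (hmono (Fin.succ_le_succ_iff.1 hij))
  · rw [← Fin.succ_last, Fin.cons_succ, h1, Submodule.comap_top]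
  · intro i
    induction i using Fin.cases with
    | zero =>
      refine subquot_congr (S := S) (M := ModuleCat.of S X) (A := ⊥) (B := N) rfl ?_ ?_
      · rw [Fin.cons_succ, h0]
        exact (Submodule.ker_mkQ N).symm
      · have : Submodule.comap N.subtype ⊥ = ⊥ := by
          rw [Submodule.comap_bot, Submodule.ker_subtype]
        exact ⟨Submodule.quotEquivOfEqBot _ this ≪≫ₗ e⟩
    | succ i =>
      obtain ⟨e1⟩ := subquot_comap N (f i.castSucc) (f i.succ)
      obtain ⟨e2⟩ := hs i
      exact ⟨e1 ≪≫ₗ e2⟩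

theorem costdFilt_zero {X : Type} [AddCommGroup X] [Module S X] (hX : Subsingleton X) :
    InCostdFilt S Q (ModuleCat.of S X) :=
  ⟨0, fun _ => ⊥, Fin.elim0, fun _ _ _ => le_rfl, rfl,
    Subsingleton.elim _ _, fun i => i.elim0⟩

theorem costdFilt_of_EV (d : Duality S Q) (h1 : ∀ ν, EV S 1 (Q.std ν) X) :
    InCostdFilt S Q (ModuleCat.of S X) :=
  good_dev d (fun _ => True) (fun X _ _ => InCostdFilt S Q (ModuleCat.of S X))
    (fun _ _ _ h => costdFilt_zero h)
    (fun _ _ _ N ν ⟨e⟩ _ h => costdFilt_step N ν e h) _ X rfl h1 (fun _ _ => trivial)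

theorem EV_of_costdFilt {M : ModuleCat.{0} S} (h : InCostdFilt S Q M) (ν : Λ) (i : ℕ) :
    EV S (i + 1) (Q.std ν) M := by
  obtain ⟨n, f, g, hmono, h0, h1, hs⟩ := h
  have : ∀ j, EV S (i + 1) (Q.std ν) (f j) := by
    intro j
    induction j using Fin.induction with
    | zero =>
      have : Subsingleton (f 0) := by rw [h0]; infer_instance
      exact EV.of_sub2 _
    | succ j ih =>
      obtain ⟨e⟩ := hs j
      exact (SES.subq (hmono (Fin.castSucc_le_succ j))).cov2 ih
        (EV.congr2 e (EV.std_costd Q ν _ i))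
  have h2 := this (Fin.last n)
  rw [h1] at h2
  exact EV.congr2 Submodule.topEquiv.symm h2

/-- all Ext from standard modules vanish above degree `n` -/
def gle (Q : QHData S Λ) (n : ℕ) (X : Type) [AddCommGroup X] [Module S X] : Prop :=
  ∀ ν i, n < i → EV S i (Q.std ν) X

theorem gle_of_GfdLE {M : ModuleCat.{0} S} {n : ℕ} (h : GfdLE S Q M n) : gle Q n M := by
  obtain ⟨N, f, ⟨hi, hs, hex⟩, rfl, hF⟩ := h
  intro ν
  have key : ∀ j : Fin (n + 1), ∀ i, n - (j : ℕ) < i → EV S i (Q.std ν) (LinearMap.range (f j)) := by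
    intro j
    induction j using Fin.reverseInduction with
    | last =>
      intro i hi
      obtain ⟨i, rfl⟩ : ∃ m, i = m + 1 := ⟨i - 1, by omega⟩
      rw [LinearMap.range_eq_top.2 hs]
      exact EV.congr2 Submodule.topEquiv (EV_of_costdFilt (hF (Fin.last n)) ν i)
    | cast j ih =>
      intro i hi
      have hj := j.2
      simp at hi
      obtain ⟨i, rfl⟩ : ∃ m, i = m + 1 := ⟨i - 1, by omega⟩
      rw [hex j]
      refine (SES.ofSurj (f j.succ).surjective_rangeRestrict |> fun h => ?_)
      rw [LinearMap.ker_rangeRestrict] at h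
      refine h.cov1 (ih i (by simp; omega)) (EV_of_costdFilt (hF j.castSucc) ν i)
  intro i hn
  exact EV.congr2 (LinearEquiv.ofInjective (f 0) hi) (key 0 i (by simpa using hn))

end good
end QHProof

namespace QHProof
open CategoryTheory QHPaper
set_option linter.unusedSectionVars false
section res
variable {S : Type} [Ring S] [IsArtinianRing S] {Λ : Type} [Fintype Λ] [PartialOrder Λ]
variable {Q : QHData S Λ}

/-- infinite coresolution data with good terms vanishing after `n`; `E 0` is the module -/
theorem exists_cores (d : Duality S Q) (n : ℕ) : ∀ (X : Type) [AddCommGroup X] [Module S X]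
    [Module.Finite S X], gle Q n X → ∃ (E : ℕ → ModuleCat.{0} S)
      (g : ∀ j, E j →ₗ[S] E (j + 1)), E 0 = ModuleCat.of S X ∧ Function.Injective (g 0) ∧
      (∀ j, LinearMap.range (g j) = LinearMap.ker (g (j + 1))) ∧
      (∀ j, InCostdFilt S Q (E (j + 1))) ∧ (∀ j, n < j → Subsingleton (E (j + 1))) := by
  induction n with
  | zero =>
    intro X _ _ _ hX
    refine ⟨fun j => match j with
      | 0 => ModuleCat.of S X
      | 1 => ModuleCat.of S X
      | _ + 2 => ModuleCat.of S PUnit, fun j => match j with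
      | 0 => (LinearMap.id : X →ₗ[S] X)
      | 1 => (0 : X →ₗ[S] PUnit)
      | _ + 2 => (0 : PUnit →ₗ[S] PUnit), rfl, fun x y h => h, ?_, ?_, ?_⟩
    · intro j
      match j with
      | 0 =>
        show LinearMap.range (LinearMap.id : X →ₗ[S] X) = LinearMap.ker (0 : X →ₗ[S] PUnit)
        simp
      | 1 =>
        show LinearMap.range (0 : X →ₗ[S] PUnit) = LinearMap.ker (0 : PUnit →ₗ[S] PUnit)
        exact Subsingleton.elim _ _
      | _ + 2 =>
        show LinearMap.range (0 : PUnit →ₗ[S] PUnit) = LinearMap.ker (0 : PUnit →ₗ[S] PUnit)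
        exact Subsingleton.elim _ _
    · intro j
      match j with
      | 0 => exact costdFilt_of_EV d (fun ν => hX ν 1 (by omega))
      | _ + 1 => exact costdFilt_zero (X := PUnit) inferInstance
    · intro j hj
      match j with
      | j + 1 => exact (inferInstance : Subsingleton PUnit)
  | succ n ih =>
    intro X _ _ _ hX
    obtain ⟨J, hJ, hI, f, hf⟩ := exists_inj d X
    have hq : gle Q n (J ⧸ LinearMap.range f) := by
      intro ν i hi
      obtain ⟨i, rfl⟩ : ∃ m, i = m + 1 := ⟨i - 1, by omega⟩
      exact (SES.ofInj hf).cov3 (EV.inj i hI) (hX ν _ (by omega))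
    obtain ⟨E, g, h0, hinj, hex, hF, hz⟩ := ih _ hq
    let q : J →ₗ[S] E 0 := (h0 ▸ (LinearMap.range f).mkQ : J →ₗ[S] E 0)
    have hqs : Function.Surjective q ∧ LinearMap.ker q = LinearMap.range f := by
      have : ∀ (T : ModuleCat.{0} S) (hT : T = ModuleCat.of S (J ⧸ LinearMap.range f)),
        Function.Surjective (hT ▸ (LinearMap.range f).mkQ : J →ₗ[S] T) ∧
        LinearMap.ker (hT ▸ (LinearMap.range f).mkQ : J →ₗ[S] T) = LinearMap.range f := by
        rintro T rfl
        exact ⟨Submodule.mkQ_surjective _, Submodule.ker_mkQ _⟩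
      exact this _ h0
    refine ⟨fun j => match j with
      | 0 => ModuleCat.of S X
      | 1 => J
      | j + 2 => E (j + 1), fun j => match j with
      | 0 => f
      | 1 => g 0 ∘ₗ q
      | j + 2 => g (j + 1), rfl, hf, ?_, ?_, ?_⟩
    · intro j
      match j with
      | 0 =>
        show LinearMap.range f = LinearMap.ker (g 0 ∘ₗ q)
        rw [LinearMap.ker_comp_of_ker_eq_bot _ (LinearMap.ker_eq_bot.2 hinj), hqs.2]
      | 1 =>
        show LinearMap.range (g 0 ∘ₗ q) = LinearMap.ker (g 1)
        rw [LinearMap.range_comp_of_range_eq_top _ (LinearMap.range_eq_top.2 hqs.1)]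
        exact hex 0
      | j + 2 => exact hex (j + 1)
    · intro j
      match j with
      | 0 => exact costdFilt_of_EV d (X := J) (fun ν => EV.inj 0 hI)
      | j + 1 => exact hF j
    · intro j hj
      match j with
      | j + 1 => exact hz j (by omega)

theorem GfdLE_of_gle (d : Duality S Q) {n : ℕ} {X : Type} [AddCommGroup X] [Module S X]
    [Module.Finite S X] (h : gle Q n X) : GfdLE S Q (ModuleCat.of S X) n := by
  obtain ⟨E, g, h0, hinj, hex, hF, hz⟩ := exists_cores d n X h
  refine ⟨fun i => E i.val, fun i => g i.val, ⟨hinj, ?_, fun i => hex i.val⟩, h0,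
    fun i => hF i.val⟩
  have h1 : LinearMap.range (g n) = ⊤ := by
    rw [hex n, LinearMap.ker_eq_top]
    ext x
    exact @Subsingleton.elim _ (hz (n + 1) (by omega)) _ _
  exact LinearMap.range_eq_top.1 h1

theorem EV_of_ProjdimLE {M : ModuleCat.{0} S} {n : ℕ} (h : ProjdimLE S M n)
    (Y : Type) [AddCommGroup Y] [Module S Y] (i : ℕ) (hin : n < i) : EV S i M Y := by
  obtain ⟨N, f, ⟨hi, hs, hex⟩, rfl, hF⟩ := h
  have key : ∀ j : Fin (n + 1), ∀ i, (j : ℕ) < i → EV S i (LinearMap.range (f j)) Y := by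
    intro j
    induction j using Fin.induction with
    | zero =>
      intro i h
      obtain ⟨i, rfl⟩ : ∃ m, i = m + 1 := ⟨i - 1, by omega⟩
      have := hF 0
      exact EV.congr1 (LinearEquiv.ofInjective (f 0) hi).symm (EV.proj i)
    | succ j ih =>
      intro i hi
      simp at hi
      obtain ⟨i, rfl⟩ : ∃ m, i = m + 1 := ⟨i - 1, by omega⟩
      obtain ⟨i, rfl⟩ : ∃ m, i = m + 1 := ⟨i - 1, by omega⟩
      have h := SES.ofSurj (f j.succ).surjective_rangeRestrict
      rw [LinearMap.ker_rangeRestrict, ← hex j] at h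
      have := hF j.succ
      exact h.con3 (ih _ (by simp; omega)) (EV.proj _)
  have h2 := key (Fin.last n) i (by simpa using hin)
  rw [LinearMap.range_eq_top.2 hs] at h2
  exact EV.congr1 Submodule.topEquiv.symm h2

theorem proj_of_EV {X : Type} [AddCommGroup X] [Module S X] [Module.Finite S X]
    (h : ∀ (Y : Type) [AddCommGroup Y] [Module S Y] [Module.Finite S Y], EV S 1 X Y) :
    Module.Projective S X := by
  obtain ⟨n, f, hf⟩ := Module.Finite.exists_fin' S X
  obtain ⟨s, hs⟩ := (SES.ofSurj hf).lift (h _) LinearMap.id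
  exact Module.Projective.of_split s f hs

theorem exists_projres (n : ℕ) : ∀ (X : Type) [AddCommGroup X] [Module S X]
    [Module.Finite S X], (∀ (Y : Type) [AddCommGroup Y] [Module S Y] [Module.Finite S Y],
      ∀ i, n < i → EV S i X Y) → ∃ (E : ℕ → ModuleCat.{0} S)
      (g : ∀ j, E (j + 1) →ₗ[S] E j), E 0 = ModuleCat.of S X ∧ Function.Surjective (g 0) ∧
      (∀ j, LinearMap.range (g (j + 1)) = LinearMap.ker (g j)) ∧
      (∀ j, Module.Projective S (E (j + 1))) ∧ (∀ j, n < j → Subsingleton (E (j + 1))) := by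
  induction n with
  | zero =>
    intro X _ _ _ hX
    refine ⟨fun j => match j with
      | 0 => ModuleCat.of S X
      | 1 => ModuleCat.of S X
      | _ + 2 => ModuleCat.of S PUnit, fun j => match j with
      | 0 => (LinearMap.id : X →ₗ[S] X)
      | 1 => (0 : PUnit →ₗ[S] X)
      | _ + 2 => (0 : PUnit →ₗ[S] PUnit), rfl, fun x => ⟨x, rfl⟩, ?_, ?_, ?_⟩
    · intro j
      match j with
      | 0 =>
        show LinearMap.range (0 : PUnit →ₗ[S] X) = LinearMap.ker (LinearMap.id : X →ₗ[S] X)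
        simp
      | 1 =>
        show LinearMap.range (0 : PUnit →ₗ[S] PUnit) = LinearMap.ker (0 : PUnit →ₗ[S] X)
        exact Subsingleton.elim _ _
      | _ + 2 =>
        show LinearMap.range (0 : PUnit →ₗ[S] PUnit) = LinearMap.ker (0 : PUnit →ₗ[S] PUnit)
        exact Subsingleton.elim _ _
    · intro j
      match j with
      | 0 => exact proj_of_EV (X := X) (fun Y => hX Y 1 (by omega))
      | _ + 1 => exact (inferInstance : Module.Projective S PUnit)
    · intro j hj
      match j with
      | j + 1 => exact (inferInstance : Subsingleton PUnit)
  | succ n ih =>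
    intro X _ _ _ hX
    obtain ⟨m, f, hf⟩ := Module.Finite.exists_fin' S X
    obtain ⟨E, g, h0, hsur, hex, hF, hz⟩ := ih (LinearMap.ker f) (by
      intro Y _ _ _ i hi
      obtain ⟨i, rfl⟩ : ∃ m, i = m + 1 := ⟨i - 1, by omega⟩
      exact (SES.ofSurj hf).con1 (EV.proj i) (hX Y _ (by omega)))
    have : ∀ (T : ModuleCat.{0} S) (_ : T = ModuleCat.of S (LinearMap.ker f)),
        ∃ q : T →ₗ[S] (Fin m → S), Function.Injective q ∧
          LinearMap.range q = LinearMap.ker f := by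
      rintro T rfl
      exact ⟨(LinearMap.ker f).subtype, Submodule.injective_subtype _, Submodule.range_subtype _⟩
    obtain ⟨q, hq1, hq2⟩ := this _ h0
    refine ⟨fun j => match j with
      | 0 => ModuleCat.of S X
      | 1 => ModuleCat.of S (Fin m → S)
      | j + 2 => E (j + 1), fun j => match j with
      | 0 => f
      | 1 => q ∘ₗ g 0
      | j + 2 => g (j + 1), rfl, hf, ?_, ?_, ?_⟩
    · intro j
      match j with
      | 0 =>
        show LinearMap.range (q ∘ₗ g 0) = LinearMap.ker f
        rw [LinearMap.range_comp_of_range_eq_top _ (LinearMap.range_eq_top.2 hsur), hq2]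
      | 1 =>
        show LinearMap.range (g 1) = LinearMap.ker (q ∘ₗ g 0)
        rw [LinearMap.ker_comp_of_ker_eq_bot _ (LinearMap.ker_eq_bot.2 hq1)]
        exact hex 0
      | j + 2 => exact hex (j + 1)
    · intro j
      match j with
      | 0 => exact (inferInstance : Module.Projective S (Fin m → S))
      | j + 1 => exact hF j
    · intro j hj
      match j with
      | j + 1 => exact hz j (by omega)

/-- transported map -/
def tr {E : ℕ → ModuleCat.{0} S} (g : ∀ j, E (j + 1) →ₗ[S] E j) (a b : ℕ) (h : a = b + 1) :
    E a →ₗ[S] E b := by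
  subst h
  exact g b

theorem tr_ex {E : ℕ → ModuleCat.{0} S} (g : ∀ j, E (j + 1) →ₗ[S] E j)
    (hex : ∀ j, LinearMap.range (g (j + 1)) = LinearMap.ker (g j)) (a b c : ℕ)
    (h : a = b + 1) (h' : b = c + 1) :
    LinearMap.range (tr g a b h) = LinearMap.ker (tr g b c h') := by
  subst h'
  subst h
  exact hex c

theorem ProjdimLE_of_EV {n : ℕ} {X : Type} [AddCommGroup X] [Module S X]
    [Module.Finite S X] (h : ∀ (Y : Type) [AddCommGroup Y] [Module S Y] [Module.Finite S Y],
      ∀ i, n < i → EV S i X Y) : ProjdimLE S (ModuleCat.of S X) n := by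
  obtain ⟨E, g, h0, hsur, hex, hF, hz⟩ := exists_projres n X h
  refine ⟨fun i => E (n + 1 - i.val), fun i => tr g _ _ (by
    have := i.2
    simp
    omega), ⟨?_, ?_, fun i => tr_ex g hex _ _ _ _ _⟩, ?_, ?_⟩
  · rw [← LinearMap.ker_eq_bot]
    have := hz (n + 1) (by omega)
    rw [← tr_ex g hex (n + 2) (n + 1 - (0 : Fin (n + 1)).castSucc.val)
      (n + 1 - (0 : Fin (n + 1)).succ.val) (by simp) (by simp)]
    rw [LinearMap.range_eq_bot]
    ext x
    have : x = 0 := Subsingleton.elim _ _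
    rw [this, map_zero, map_zero]
  · have : ∀ a b (h : a = b + 1), b = 0 → Function.Surjective (tr g a b h) := by
      intro a b h hb
      subst hb
      subst h
      exact hsur
    exact this _ _ _ (by simp)
  · simp [h0]
  · intro i
    have := i.2
    have : ∀ a, 0 < a → Module.Projective S (E a) := by
      intro a ha
      match a with
      | a + 1 => exact hF a
    exact this _ (by simp; omega)

end res
end QHProof

namespace QHProof
open CategoryTheory QHPaper
set_option linter.unusedSectionVars false
section upper
variable {S : Type} [Ring S] [IsArtinianRing S] {Λ : Type} [Fintype Λ] [PartialOrder Λ]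
variable {Q : QHData S Λ} {X : Type} [AddCommGroup X] [Module S X] [Module.Finite S X]

theorem gfd_le_of_gle (d : Duality S Q) {n : ℕ} (h : gle Q n X) :
    gfd S Q (ModuleCat.of S X) ≤ n := Nat.sInf_le (GfdLE_of_gle d h)

theorem gle_gfd (d : Duality S Q) : gle Q (gfd S Q (ModuleCat.of S X)) X := by
  obtain ⟨b, hb⟩ := EV.std_bound' Q
  exact gle_of_GfdLE (Nat.sInf_mem (s := {m | GfdLE S Q (ModuleCat.of S X) m})
    ⟨b, GfdLE_of_gle d (fun ν i hi => hb ν i X hi)⟩)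

theorem gfd_le_alg (d : Duality S Q) : gfd S Q (ModuleCat.of S X) ≤ gfdAlg S Q := by
  obtain ⟨b, hb⟩ := EV.std_bound' Q
  refine le_csSup ⟨b, ?_⟩ ⟨ModuleCat.of S X, ‹_›, rfl⟩
  rintro _ ⟨M, hM, rfl⟩
  exact gfd_le_of_gle (X := M) d (fun ν i hi => hb ν i M hi)

theorem gle_alg (d : Duality S Q) : gle Q (gfdAlg S Q) X :=
  fun ν i hi => gle_gfd d ν i (lt_of_le_of_lt (gfd_le_alg d) hi)

theorem EV_upper (d : Duality S Q) (M : Type) [AddCommGroup M] [Module S M] [Module.Finite S M]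
    (j : ℕ) : ∀ (N : Type) [AddCommGroup N] [Module S N] [Module.Finite S N], gle Q j N →
      ∀ i, gfdAlg S Q + j < i → EV S i M N := by
  induction j with
  | zero =>
    intro N _ _ _ hN i hi
    exact EV.good d (fun ν => hN ν 1 (by omega))
      (fun ν _ => EV.to_costd d (gle_alg d ν i (by omega)))
  | succ j ih =>
    intro N _ _ _ hN i hi
    obtain ⟨J, hJ, hI, f, hf⟩ := exists_inj d N
    obtain ⟨i, rfl⟩ : ∃ m, i = m + 1 := ⟨i - 1, by omega⟩
    refine (SES.ofInj hf).cov1 (ih _ ?_ i (by omega)) (EV.inj i hI)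
    intro ν i hi
    obtain ⟨i, rfl⟩ : ∃ m, i = m + 1 := ⟨i - 1, by omega⟩
    exact (SES.ofInj hf).cov3 (EV.inj i hI) (hN ν _ (by omega))

theorem projdimLE_upper (d : Duality S Q) : ProjdimLE S (ModuleCat.of S X) (2 * gfdAlg S Q) :=
  ProjdimLE_of_EV (fun Y _ _ _ i hi => EV_upper d X (gfdAlg S Q) Y (gle_alg d) i (by omega))

theorem globdim_le (d : Duality S Q) : globdim S ≤ 2 * gfdAlg S Q := by
  refine csSup_le ⟨_, ModuleCat.of S PUnit, ?_, rfl⟩ ?_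
  · exact (inferInstance : Module.Finite S PUnit)
  · rintro _ ⟨M, hM, rfl⟩
    exact Nat.sInf_le (projdimLE_upper (X := M) d)

theorem globdim_ge (d : Duality S Q) {m : ℕ} (A B : Type) [AddCommGroup A] [Module S A]
    [Module.Finite S A] [AddCommGroup B] [Module S B] (h : ¬ EV S m A B) : m ≤ globdim S := by
  have h1 : projdim S (ModuleCat.of S A) ≤ globdim S := by
    refine le_csSup ⟨2 * gfdAlg S Q, ?_⟩ ⟨ModuleCat.of S A, ‹_›, rfl⟩
    rintro _ ⟨M, hM, rfl⟩
    exact Nat.sInf_le (projdimLE_upper (X := M) d)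
  refine le_trans ?_ h1
  by_contra hlt
  have h2 : ProjdimLE S (ModuleCat.of S A) (projdim S (ModuleCat.of S A)) :=
    Nat.sInf_mem (s := {m | ProjdimLE S (ModuleCat.of S A) m}) ⟨_, projdimLE_upper d⟩
  exact h (EV_of_ProjdimLE h2 B m (by omega))

theorem exists_top (d : Duality S Q) (hn : 0 < gfdAlg S Q) : ∃ l μ,
    ¬ EV S (gfdAlg S Q) (Q.std μ) (Q.L l) ∧ gfd S Q (Q.L l) = gfdAlg S Q := by
  have h1 : ∃ l, ¬ gle Q (gfdAlg S Q - 1) (Q.L l) := by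
    by_contra hcon
    push Not at hcon
    have : gfdAlg S Q ≤ gfdAlg S Q - 1 := by
      refine csSup_le ⟨_, ModuleCat.of S PUnit, ?_, rfl⟩ ?_
      · exact (inferInstance : Module.Finite S PUnit)
      · rintro _ ⟨M, hM, rfl⟩
        exact gfd_le_of_gle (X := M) d (fun ν i hi => EV.dev2 Q (fun κ _ => hcon κ ν i hi))
    omega
  obtain ⟨l, hl⟩ := h1
  unfold gle at hl
  push Not at hl
  obtain ⟨μ, i, hi, h⟩ := hl
  have h2 : i = gfdAlg S Q := by
    by_contra hne
    exact h (gle_alg d μ i (by omega))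
  subst h2
  refine ⟨l, μ, h, le_antisymm (gfd_le_alg (X := Q.L l) d) ?_⟩
  by_contra hlt
  exact h (gle_gfd (X := Q.L l) d μ _ (not_le.1 hlt))

end upper
end QHProof

namespace QHProof
open CategoryTheory QHPaper
set_option linter.unusedSectionVars false
section lower
variable {S : Type} [Ring S] [IsArtinianRing S] {Λ : Type} [Fintype Λ] [PartialOrder Λ]
variable {Q : QHData S Λ} {X : Type} [AddCommGroup X] [Module S X] [Module.Finite S X]

theorem ext_bound (d : Duality S Q) (hA : StrongPropA S Q) (j : ℕ) : ∀ ν l,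
    ¬ EV S j (Q.std ν) (Q.L l) → j + gfd S Q (Q.L ν) ≤ gfd S Q (Q.L l) := by
  induction j with
  | zero =>
    intro ν l h
    have : cf Q ν (Q.L l) := by
      by_contra hc
      exact h (hom_std hc)
    rw [cf_L.1 this]
    omega
  | succ j ih =>
    intro ν l h
    obtain ⟨ι, hι, -, hq⟩ := costd_ses d l
    have := finCostd d l
    have h1 : ∃ κ, cf Q κ (Q.costd l ⧸ LinearMap.range ι) ∧ ¬ EV S j (Q.std ν) (Q.L κ) := by
      by_contra hc
      push Not at hc
      exact h ((SES.ofInj hι).cov1 (EV.dev2 Q hc) (EV.std_costd Q ν l j))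
    obtain ⟨κ, h2, h3⟩ := h1
    have := ih ν κ h3
    have := hA κ l (hq κ h2)
    omega

theorem ext_bound' (d : Duality S Q) (hA : StrongPropA S Q) (j : ℕ) (ν l : Λ)
    (h : ¬ EV S j (Q.L l) (Q.costd ν)) : j + gfd S Q (Q.L ν) ≤ gfd S Q (Q.L l) := by
  apply ext_bound d hA
  intro h1
  obtain ⟨e⟩ := du_L d l
  exact h (EV.to_costd d (EV.congr2 e h1))

theorem std_simple (hA : StrongPropA S Q) {μ : Λ} (h : gfd S Q (Q.L μ) = 0) :
    Nonempty (Q.std μ ≃ₗ[S] Q.L μ) := by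
  obtain ⟨t, ht, hk⟩ := std_top Q μ
  have := finStd Q μ
  have h1 : Subsingleton (LinearMap.ker t) := sub_of_no_cf Q (fun κ hκ => by
    have := hA κ μ (hk κ hκ)
    omega)
  refine ⟨LinearEquiv.ofBijective t ⟨?_, ht⟩⟩
  rw [← LinearMap.ker_eq_bot]
  exact Submodule.eq_bot_of_subsingleton

theorem EV_L_symm (d : Duality S Q) {i : ℕ} {κ l : Λ} (h : EV S i (Q.L κ) (Q.L l)) :
    EV S i (Q.L l) (Q.L κ) := by
  obtain ⟨e1⟩ := du_L d l
  obtain ⟨e2⟩ := du_L d κ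
  exact EV.congr1 e1.symm (EV.congr2 e2.symm (EV.dual d i h))

theorem max_sub (P : Λ → Prop) : ∃ R : Submodule S X, (∀ κ, cf Q κ R → P κ) ∧
    ∀ (A : Type) [AddCommGroup A] [Module S A] [Module.Finite S A], (∀ κ, cf Q κ A → P κ) →
      EV S 0 A (X ⧸ R) := by
  have hN : WellFoundedGT (Submodule S X) := inferInstance
  obtain ⟨R, hR, hmax⟩ := hN.wf.has_min {R : Submodule S X | ∀ κ, cf Q κ R → P κ}
    ⟨⊥, fun κ h => absurd h (not_cf_sub (X := (⊥ : Submodule S X)))⟩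
  refine ⟨R, hR, fun A _ _ _ hA => EV.dev1 Q (fun κ hκ => ?_)⟩
  rw [EV.zero_iff]
  intro f
  let R' := (LinearMap.range f).comap R.mkQ
  have hle : R ≤ R' := fun x hx => by
    show R.mkQ x ∈ LinearMap.range f
    rw [(Submodule.Quotient.mk_eq_zero R).2 hx |> (show R.mkQ x = 0 from ·)]
    exact zero_mem _
  let q : R' →ₗ[S] LinearMap.range f := R.mkQ.restrict (fun x hx => hx)
  have hses : SES (Submodule.inclusion hle) q := by
    refine ⟨Submodule.inclusion_injective hle, ?_, ?_⟩
    · rintro ⟨y, hy⟩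
      obtain ⟨x, rfl⟩ := R.mkQ_surjective y
      exact ⟨⟨x, hy⟩, rfl⟩
    · rw [Submodule.range_inclusion]
      ext x
      rw [Submodule.mem_comap, LinearMap.mem_ker, ← Subtype.coe_inj]
      exact (Submodule.Quotient.mk_eq_zero R).symm
  have hP : ∀ κ', cf Q κ' R' → P κ' := by
    intro κ' h
    rcases cf.ses hses h with h | h
    · exact hR κ' h
    · rw [cf_L.1 (cf.of_surj f.rangeRestrict f.surjective_rangeRestrict h)]
      exact hA κ hκ
  have hnot : ¬ R < R' := hmax R' hP
  have heq : R = R' := le_antisymm hle (by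
    by_contra hc
    exact hnot (lt_of_le_not_ge hle hc))
  ext x
  obtain ⟨y, hy⟩ := R.mkQ_surjective (f x)
  have hy' : y ∈ R' := by
    show R.mkQ y ∈ LinearMap.range f
    rw [hy]
    exact ⟨x, rfl⟩
  rw [← heq] at hy'
  rw [← hy]
  exact (Submodule.Quotient.mk_eq_zero R).2 hy'

theorem cosyz (d : Duality S Q) (m : ℕ) : ∀ (X : Type) [AddCommGroup X] [Module S X]
    [Module.Finite S X], ∃ V : ModuleCat.{0} S, Module.Finite S V ∧
      ∀ (i : ℕ) (A : Type) [AddCommGroup A] [Module S A], EV S (i + 1 + m) A X ↔ EV S (i + 1) A V := by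
  induction m with
  | zero =>
    intro X _ _ hX
    exact ⟨ModuleCat.of S X, hX, fun i A _ _ => Iff.rfl⟩
  | succ m ih =>
    intro X _ _ hX
    obtain ⟨J, hJ, hI, f, hf⟩ := exists_inj d X
    obtain ⟨V, hV, h⟩ := ih (J ⧸ LinearMap.range f)
    refine ⟨V, hV, fun i A _ _ => ?_⟩
    rw [← h i A]
    constructor
    · intro h1
      rw [show i + 1 + m = (i + m) + 1 by omega]
      refine (SES.ofInj hf).cov3 (EV.inj _ hI) ?_
      rwa [show i + m + 1 + 1 = i + 1 + (m + 1) by omega]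
    · intro h1
      exact (SES.ofInj hf).cov1 h1 (EV.inj _ hI)

end lower
end QHProof

namespace QHProof
open CategoryTheory QHPaper
set_option linter.unusedSectionVars false
section core
variable {S : Type} [Ring S] [IsArtinianRing S] {Λ : Type} [Fintype Λ] [PartialOrder Λ]
variable {Q : QHData S Λ}

theorem lift_aux {A B C : Type} [AddCommGroup A] [Module S A] [AddCommGroup B] [Module S B]
    [AddCommGroup C] [Module S C] (r : B →ₗ[S] C) (N : Submodule S B)
    (h0 : EV S 0 A (C ⧸ N.map r)) (h1 : ∀ K : Submodule S N, EV S 1 A K) (u : A →ₗ[S] C) :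
    ∃ v, r ∘ₗ v = u := by
  obtain ⟨u', hu'⟩ := (SES.sub (N.map r)).factor u (EV.zero_iff.1 h0 _)
  let rs : N →ₗ[S] N.map r := r.restrict (fun x hx => ⟨x, hx, rfl⟩)
  have hrs : Function.Surjective rs := by
    rintro ⟨_, ⟨x, hx, rfl⟩⟩
    exact ⟨⟨x, hx⟩, rfl⟩
  obtain ⟨w, hw⟩ := (SES.ofSurj hrs).lift (h1 _) u'
  refine ⟨N.subtype ∘ₗ w, ?_⟩
  rw [← hu', ← hw]
  rfl

/-- the comap of `N` in `A` maps to `N` -/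
def sub_aux {X : Type} [AddCommGroup X] [Module S X] (A N : Submodule S X) :
    N.comap A.subtype →ₗ[S] N :=
  (A.subtype ∘ₗ (N.comap A.subtype).subtype).codRestrict N (fun x => x.2)

theorem sub_aux_inj {X : Type} [AddCommGroup X] [Module S X] (A N : Submodule S X) :
    Function.Injective (sub_aux A N) := by
  intro a b hab
  have h2 : ((a : A) : X) = ((b : A) : X) := congrArg (fun t : N => (t : X)) hab
  exact Subtype.ext (Subtype.ext h2)

/-- the main argument of the lower bound; `P κ` says that `L κ` is at the bottom. -/
theorem core (d : Duality S Q) (P : Λ → Prop)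
    (hstd : ∀ κ, P κ → Nonempty (Q.std κ ≃ₗ[S] Q.L κ))
    (hstdL : ∀ ν κ i, P κ → EV S (i + 1) (Q.std ν) (Q.L κ))
    (M : Type) [AddCommGroup M] [Module S M] (n : ℕ)
    (hM : ∀ κ i, P κ → n < i → EV S i M (Q.L κ))
    (hM2 : ∀ ν, ¬ P ν → EV S n M (Q.costd ν))
    {μ : Λ} (hμ : P μ) (hMμ : ¬ EV S n M (Q.L μ))
    (V : Type) [AddCommGroup V] [Module S V] [Module.Finite S V]
    (hV : ∀ ν, ¬ P ν → EV S 1 (Q.std ν) V) (hMV : EV S (n + 1) M V) :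
    EV S 1 (Q.L μ) V := by
  have std_min : ∀ (A : Type) [AddCommGroup A] [Module S A] [Module.Finite S A],
      (∀ κ, cf Q κ A → P κ) → ∀ ν i, EV S (i + 1) (Q.std ν) A :=
    fun A _ _ _ h ν i => EV.dev2 Q (fun κ hκ => hstdL ν κ i (h κ hκ))
  have min_min : ∀ (A B : Type) [AddCommGroup A] [Module S A] [Module.Finite S A]
      [AddCommGroup B] [Module S B] [Module.Finite S B],
      (∀ κ, cf Q κ A → P κ) → (∀ κ, cf Q κ B → P κ) → ∀ i, EV S (i + 1) A B := by
    intro A B _ _ _ _ _ _ hA hB i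
    refine EV.dev1 Q (fun κ hκ => ?_)
    obtain ⟨e⟩ := hstd κ (hA κ hκ)
    exact EV.congr1 e.symm (std_min B hB κ i)
  have M_min : ∀ (A : Type) [AddCommGroup A] [Module S A] [Module.Finite S A],
      (∀ κ, cf Q κ A → P κ) → ∀ i, n < i → EV S i M A :=
    fun A _ _ _ h i hi => EV.dev2 Q (fun κ hκ => hM κ i (h κ hκ) hi)
  have Lmin : ∀ κ, P κ → ∀ κ', cf Q κ' (Q.L κ) → P κ' := by
    intro κ h κ' h'
    rwa [cf_L.1 h']
  obtain ⟨I, hIf, hI, ι, hι⟩ := exists_inj d V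
  obtain ⟨R, hR, hR0⟩ := max_sub (Q := Q) (X := I ⧸ LinearMap.range ι) P
  obtain ⟨S0, hS, hS0⟩ := max_sub (Q := Q) (X := I) P
  let z := (LinearMap.range ι).mkQ
  have hz : Function.Surjective z := Submodule.mkQ_surjective _
  let It : Submodule S I := R.comap z
  -- the sequence defining `It`
  have sesa : SES It.subtype (R.mkQ ∘ₗ z) := by
    refine ⟨Submodule.injective_subtype _, (Submodule.mkQ_surjective _).comp hz, ?_⟩
    rw [Submodule.range_subtype, LinearMap.ker_comp, Submodule.ker_mkQ]
  have hle : S0 ≤ It := by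
    have h := EV.zero_iff.1 (hR0 S0 hS) (R.mkQ ∘ₗ z ∘ₗ S0.subtype)
    intro x hx
    have := LinearMap.congr_fun h ⟨x, hx⟩
    exact (Submodule.Quotient.mk_eq_zero R).1 this
  let r : It →ₗ[S] R := z.restrict (fun x hx => hx)
  have hr : Function.Surjective r := by
    rintro ⟨y, hy⟩
    obtain ⟨x, rfl⟩ := hz y
    exact ⟨⟨x, hy⟩, rfl⟩
  have hVI : ∀ v, ι v ∈ It := by
    intro v
    show z (ι v) ∈ R
    have : z (ι v) = 0 := (Submodule.Quotient.mk_eq_zero _).2 ⟨v, rfl⟩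
    rw [this]
    exact zero_mem _
  let j : V →ₗ[S] It := ι.codRestrict It hVI
  have sesb : SES j r := by
    refine ⟨fun a b h => hι (congrArg Subtype.val h), hr, ?_⟩
    ext x
    rw [LinearMap.mem_ker, ← Subtype.coe_inj]
    have : ((r x : R) : I ⧸ LinearMap.range ι) = ((0 : R) : I ⧸ LinearMap.range ι) ↔
        (x : I) ∈ LinearMap.range ι := Submodule.Quotient.mk_eq_zero _
    rw [this]
    constructor
    · rintro ⟨v, rfl⟩
      exact ⟨v, rfl⟩
    · rintro ⟨v, hv⟩
      exact ⟨v, Subtype.ext hv⟩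
  have hIt : ∀ ν, EV S 1 (Q.std ν) It := by
    intro ν
    by_cases hν : P ν
    · obtain ⟨e⟩ := hstd ν hν
      exact sesa.cov1 (EV.congr1 e (hR0 _ (Lmin ν hν))) (EV.inj 0 hI)
    · exact sesb.cov2 (hV ν hν) (std_min R hR ν 0)
  -- the quotient `C`
  let S' : Submodule S It := S0.comap It.subtype
  have sesc := SES.subq hle
  have hC1 : ∀ ν, EV S 1 (Q.std ν) (It ⧸ S') := fun ν => sesc.cov3 (hIt ν) (std_min S0 hS ν 1)
  have hC0 : ∀ ν, P ν → EV S 0 (Q.std ν) (It ⧸ S') := by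
    intro ν hν
    obtain ⟨e⟩ := hstd ν hν
    have hinj : Function.Injective (S'.mapQ S0 It.subtype le_rfl) := by
      rw [← LinearMap.ker_eq_bot, Submodule.ker_mapQ]
      rw [eq_bot_iff, Submodule.map_le_iff_le_comap, Submodule.comap_bot, Submodule.ker_mkQ]
    exact EV.zero_inj hinj (EV.congr1 e (hS0 _ (Lmin ν hν)))
  have hC : EV S n M (It ⧸ S') := EV.good d hC1 (fun ν hν => hM2 ν (fun h => hν (hC0 ν h)))
  let T : Submodule S R := S'.map r
  let c : (It ⧸ S') →ₗ[S] (R ⧸ T) := S'.mapQ T r (Submodule.le_comap_map r S')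
  have hc : Function.Surjective c := by
    intro y
    obtain ⟨y, rfl⟩ := T.mkQ_surjective y
    obtain ⟨x, rfl⟩ := hr y
    exact ⟨S'.mkQ x, rfl⟩
  have hck : ∀ v, S'.mkQ (j v) ∈ LinearMap.ker c := by
    intro v
    show T.mkQ (r (j v)) = 0
    rw [show r (j v) = 0 from LinearMap.congr_fun sesb.comp_zero v, map_zero]
  let k : V →ₗ[S] LinearMap.ker c := (S'.mkQ ∘ₗ j).codRestrict _ hck
  have hk : Function.Surjective k := by
    rintro ⟨y, hy⟩
    obtain ⟨x, rfl⟩ := S'.mkQ_surjective y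
    have hx : r x ∈ T := (Submodule.Quotient.mk_eq_zero T).1 hy
    obtain ⟨s, hs, hsx⟩ := hx
    have : x - s ∈ LinearMap.ker r := by
      rw [LinearMap.mem_ker, map_sub, hsx, sub_self]
    rw [← sesb.ex] at this
    obtain ⟨v, hv⟩ := this
    refine ⟨v, Subtype.ext ?_⟩
    show S'.mkQ (j v) = S'.mkQ x
    rw [hv, map_sub, show S'.mkQ s = 0 from (Submodule.Quotient.mk_eq_zero S').2 hs, sub_zero]
  have hW : ∀ κ, cf Q κ (LinearMap.ker k) → P κ := by
    intro κ h
    have hmem : ∀ w : LinearMap.ker k, (ι ∘ₗ (LinearMap.ker k).subtype) w ∈ S0 := by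
      rintro ⟨w, hw⟩
      have h1 : S'.mkQ (j w) = 0 := congrArg Subtype.val hw
      exact (Submodule.Quotient.mk_eq_zero S').1 h1
    refine hS κ (cf.of_inj ((ι ∘ₗ (LinearMap.ker k).subtype).codRestrict S0 hmem) ?_ h)
    intro a b hab
    exact Subtype.ext (hι (congrArg Subtype.val hab))
  have hK : EV S (n + 1) M (LinearMap.ker c) :=
    (SES.ofSurj hk).cov3 hMV (M_min _ hW _ (by omega))
  have hR'' : EV S n M (R ⧸ T) := (SES.ofSurj hc).cov3 hC hK
  have hRmin : ∀ κ, cf Q κ (R ⧸ T) → P κ := fun κ h =>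
    hR κ (cf.of_surj T.mkQ T.mkQ_surjective h)
  have hz0 : EV S 0 (Q.L μ) (R ⧸ T) := by
    rw [EV.zero_iff]
    intro u
    by_contra hu
    have hui := L_inj_or_zero u hu
    obtain ⟨v, hv⟩ := (SES.ofInj hui).extend (min_min _ _
      (fun κ h => hRmin κ (cf.of_surj (LinearMap.range u).mkQ (Submodule.mkQ_surjective _) h))
      (Lmin μ hμ) 0) LinearMap.id
    exact hMμ (EV.retract2 v u hv hR'')
  obtain ⟨e⟩ := hstd μ hμ
  refine sesb.of_lift (EV.congr1 e.symm (hIt μ)) (fun u => ?_)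
  refine lift_aux r S' hz0 (fun K => min_min _ _ (Lmin μ hμ) (fun κ h => ?_) 0) u
  have h1 := cf.of_inj K.subtype (Submodule.injective_subtype _) h
  refine hS κ (cf.of_inj (sub_aux It S0) (sub_aux_inj It S0) h1)

theorem lower (d : Duality S Q) (hA : StrongPropA S Q) (hn : 0 < gfdAlg S Q) :
    ∃ l, ¬ EV S (2 * gfdAlg S Q) (Q.L l) (Q.L l) := by
  obtain ⟨l, μ, hlμ, hl⟩ := exists_top d hn
  set n := gfdAlg S Q with hndef
  refine ⟨l, fun h2n => ?_⟩
  have hμ : gfd S Q (Q.L μ) = 0 := by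
    have := ext_bound d hA n μ l hlμ
    omega
  obtain ⟨V, hVf, hV⟩ := cosyz d (n - 1) (Q.L l)
  have hstd : ∀ κ, gfd S Q (Q.L κ) = 0 → Nonempty (Q.std κ ≃ₗ[S] Q.L κ) :=
    fun κ h => std_simple hA h
  obtain ⟨e⟩ := hstd μ hμ
  have hμl : ¬ EV S n (Q.L μ) (Q.L l) := fun h => hlμ (EV.congr1 e h)
  have hcore := core d (fun κ => gfd S Q (Q.L κ) = 0) hstd
    (fun ν κ i hκ => by
      by_contra h
      have := ext_bound d hA _ _ _ h
      omega)
    (Q.L l) n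
    (fun κ i hκ hi => by
      obtain ⟨e⟩ := hstd κ hκ
      exact EV_L_symm d (EV.congr1 e.symm (gle_alg d κ i hi)))
    (fun ν hν => by
      by_contra h
      have := ext_bound' d hA _ _ _ h
      omega)
    hμ (fun h => hμl (EV_L_symm d h)) V
    (fun ν hν => by
      rw [← hV 0]
      by_contra h
      have := ext_bound d hA _ _ _ h
      omega)
    (by
      rw [← hV n, show n + 1 + (n - 1) = 2 * n by omega]
      exact h2n)
  rw [← hV 0, show 0 + 1 + (n - 1) = n by omega] at hcore
  exact hμl hcore

theorem globdim_eq (d : Duality S Q) (hA : StrongPropA S Q) :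
    globdim S = 2 * gfdAlg S Q := by
  refine le_antisymm (globdim_le d) ?_
  rcases Nat.eq_zero_or_pos (gfdAlg S Q) with h | h
  · omega
  · obtain ⟨l, hl⟩ := lower d hA h
    exact globdim_ge d _ _ hl

end core
end QHProof


open QHPaper in
/-- Let `S` be a quasi-hereditary algebra with a simple-preserving duality
satisfying strong property A and with `gfd(S) = n`. Then the global dimension of `S`
equals `2n`. -/
theorem stmt1 (k S Λ : Type) [Field k] [Ring S] [Algebra k S] [FiniteDimensional k S]
    [Fintype Λ] [PartialOrder Λ]
    (QH : QHData S Λ) (dual : Duality S QH)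
    (hA : StrongPropA S QH) (n : ℕ) (hgfd : gfdAlg S QH = n) :
    globdim S = 2 * n := by
  have hart : IsArtinianRing S := IsArtinianRing.of_finite k S
  rw [← hgfd]
  exact QHProof.globdim_eq dual hA
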